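/- arXiv:2206.02500 — 8 statements merged into one kernel-verified Lean document; each statement's English description precedes it below -/
import Mathlib

section
/- Let θ_m < θ_M be real numbers with θ_M − θ_m ∈ (0, π), and let S = {(r cos θ, r sin θ) : r > 0, θ ∈ [θ_m, θ_M]} ⊂ ℝ² be the infinite open sector with apex at the origin. Let d, d⊥ ∈ ℝ² be unit vectors with ⟪d, d⊥⟫ = 0 such that ⟪d, x⟫ < 0 for every x ∈ S with x ≠ 0, and let τ > 0. Then the integral ∫_S exp(τ(⟪d, x⟫ + i ⟪d⊥, x⟫)) dx converges absolutely and its modulus equals sin(θ_M − θ_m) / τ². -/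
/-!
The sector is, up to a null set, the image of the open quadrant `(0, ∞)²` under the linear map
`M (s, t) = s e_m + t e_M`, where `e_m, e_M` are the unit vectors spanning its two edges
(`sector_ae_eq`). The determinant of `M` is `sin (θM - θm) > 0`, and pulled back along `M` the
CGO function is the product `exp (A s) * exp (B t)` with `A = τ (⟪d, e_m⟫ + i ⟪dp, e_m⟫)` and
`B = τ (⟪d, e_M⟫ + i ⟪dp, e_M⟫)`. Both edges lie in the sector, so `A` and `B` have negative
real part, and Fubini gives the value `sin (θM - θm) / (A * B)` (`sector_integral`). Since
`(d, dp)` is an orthonormal basis, `‖A‖ = ‖B‖ = τ`.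
-/

open MeasureTheory
open scoped RealInnerProductSpace

namespace SectorCGO

open Set

/-- The linear map `(s, t) ↦ s e_m + t e_M`, where `e_m = (cos θm, sin θm)` and
`e_M = (cos θM, sin θM)`. -/
noncomputable def edgeMap (θm θM : ℝ) : ℝ × ℝ →L[ℝ] ℝ × ℝ :=
  LinearMap.toContinuousLinearMap (Matrix.toLin (Module.Basis.finTwoProd ℝ)
    (Module.Basis.finTwoProd ℝ) !![Real.cos θm, Real.cos θM; Real.sin θm, Real.sin θM])

lemma edgeMap_apply (θm θM : ℝ) (p : ℝ × ℝ) :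
    edgeMap θm θM p = (p.1 * Real.cos θm + p.2 * Real.cos θM,
      p.1 * Real.sin θm + p.2 * Real.sin θM) := by
  simp [edgeMap, Matrix.toLin_finTwoProd_apply, mul_comm]

lemma edgeMap_det (θm θM : ℝ) : (edgeMap θm θM).det = Real.sin (θM - θm) := by
  simp only [edgeMap, LinearMap.det_toContinuousLinearMap, LinearMap.det_toLin,
    Matrix.det_fin_two_of, Real.sin_sub]
  ring

lemma edgeMap_injective {θm θM : ℝ} (h : 0 < Real.sin (θM - θm)) :
    Function.Injective (edgeMap θm θM) := by
  rintro ⟨s, t⟩ ⟨s', t'⟩ hst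
  simp only [edgeMap_apply, Prod.mk.injEq] at hst
  obtain ⟨h1, h2⟩ := hst
  have hs : (s - s') * Real.sin (θM - θm) = 0 := by
    rw [Real.sin_sub]
    linear_combination Real.sin θM * h1 - Real.cos θM * h2
  have ht : (t - t') * Real.sin (θM - θm) = 0 := by
    rw [Real.sin_sub]
    linear_combination Real.cos θm * h2 - Real.sin θm * h1
  ext
  · simpa [h.ne', sub_eq_zero] using hs
  · simpa [h.ne', sub_eq_zero] using ht

/-- The sector in the coordinates `ℝ × ℝ`. -/
def sector (θm θM : ℝ) : Set (ℝ × ℝ) :=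
  {p | ∃ r θ, 0 < r ∧ θ ∈ Icc θm θM ∧ p.1 = r * Real.cos θ ∧ p.2 = r * Real.sin θ}

/-- The oblique coordinates `r sin (θM - θ) / sin (θM - θm)` and `r sin (θ - θm) / sin (θM - θm)`
of a point of the sector are nonnegative. -/
lemma sector_subset {θm θM : ℝ} (h1 : θm < θM) (h2 : θM - θm < Real.pi) :
    sector θm θM ⊆ edgeMap θm θM '' (Ici 0 ×ˢ Ici 0) := by
  rintro ⟨x, y⟩ ⟨r, θ, hr, ⟨hθ1, hθ2⟩, hx, hy⟩
  have hpos : 0 < Real.sin (θM - θm) := Real.sin_pos_of_pos_of_lt_pi (by linarith) h2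
  have hM : 0 ≤ Real.sin (θM - θ) :=
    Real.sin_nonneg_of_nonneg_of_le_pi (by linarith) (by linarith)
  have hm : 0 ≤ Real.sin (θ - θm) :=
    Real.sin_nonneg_of_nonneg_of_le_pi (by linarith) (by linarith)
  refine ⟨(r * Real.sin (θM - θ) / Real.sin (θM - θm),
    r * Real.sin (θ - θm) / Real.sin (θM - θm)), ⟨?_, ?_⟩, ?_⟩
  · simp only [mem_Ici]; positivity
  · simp only [mem_Ici]; positivity
  · simp only at hx hy
    rw [edgeMap_apply, hx, hy]
    ext
    · field_simp
      simp only [Real.sin_sub]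
      ring
    · field_simp
      simp only [Real.sin_sub]
      ring

/-- For `s, t > 0`, the intermediate value theorem provides an angle `θ ∈ (θm, θM)` whose ray is
parallel to `s e_m + t e_M`. -/
lemma subset_sector {θm θM : ℝ} (h1 : θm < θM) (h2 : θM - θm < Real.pi) :
    edgeMap θm θM '' (Ioi 0 ×ˢ Ioi 0) ⊆ sector θm θM := by
  rintro _ ⟨⟨s, t⟩, ⟨hs, ht⟩, rfl⟩
  simp only [mem_Ioi] at hs ht
  have hpos : 0 < Real.sin (θM - θm) := Real.sin_pos_of_pos_of_lt_pi (by linarith) h2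
  have hcont : ContinuousOn (fun θ => t * Real.sin (θM - θ) - s * Real.sin (θ - θm))
      (Icc θm θM) := by fun_prop
  obtain ⟨θ, hθ, h0⟩ := intermediate_value_Ioo' h1.le hcont (show (0 : ℝ) ∈ _ by
    simp only [sub_self, Real.sin_zero, mul_zero, zero_sub, sub_zero, mem_Ioo]
    exact ⟨by nlinarith, by positivity⟩)
  have hm : 0 < Real.sin (θ - θm) :=
    Real.sin_pos_of_pos_of_lt_pi (by linarith [hθ.1]) (by linarith [hθ.2])
  -- The radius is found by comparing the cross products with `e_m`.
  refine ⟨t * Real.sin (θM - θm) / Real.sin (θ - θm), θ, by positivity,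
    ⟨hθ.1.le, hθ.2.le⟩, ?_, ?_⟩
  · rw [edgeMap_apply]
    simp only at h0 ⊢
    field_simp
    simp only [Real.sin_sub] at h0 ⊢
    linear_combination (-Real.cos θm) * h0
  · rw [edgeMap_apply]
    simp only at h0 ⊢
    field_simp
    simp only [Real.sin_sub] at h0 ⊢
    linear_combination (-Real.sin θm) * h0

lemma sector_ae_eq {θm θM : ℝ} (h1 : θm < θM) (h2 : θM - θm < Real.pi) :
    sector θm θM =ᵐ[volume] edgeMap θm θM '' (Ioi 0 ×ˢ Ioi 0) := by
  refine Filter.EventuallyLE.antisymm ?_ (subset_sector h1 h2).eventuallyLE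
  refine ae_le_set.2 (measure_mono_null (t := edgeMap θm θM ''
    ((Ici 0 ×ˢ Ici 0) \ (Ioi 0 ×ˢ Ioi 0))) ?_ ?_)
  · exact (sdiff_subset_sdiff_left (sector_subset h1 h2)).trans
      (image_sdiff (edgeMap_injective
        (Real.sin_pos_of_pos_of_lt_pi (by linarith) h2)) _ _).ge
  · refine addHaar_image_eq_zero_of_differentiableOn_of_addHaar_eq_zero volume
      (edgeMap θm θM).differentiable.differentiableOn ?_
    exact ae_le_set.1 (Measure.set_prod_ae_eq (Ioi_ae_eq_Ici (a := (0 : ℝ)) (μ := volume))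
      (Ioi_ae_eq_Ici (a := (0 : ℝ)) (μ := volume))).symm.le

lemma quadrant_integrableOn {A B : ℂ} (hA : A.re < 0) (hB : B.re < 0) :
    IntegrableOn (fun p : ℝ × ℝ => Complex.exp (A * p.1) * Complex.exp (B * p.2))
      (Ioi 0 ×ˢ Ioi 0) := by
  rw [IntegrableOn, Measure.volume_eq_prod, ← Measure.prod_restrict]
  exact Integrable.mul_prod (integrableOn_exp_mul_complex_Ioi hA 0)
    (integrableOn_exp_mul_complex_Ioi hB 0)

lemma quadrant_integral {A B : ℂ} (hA : A.re < 0) (hB : B.re < 0) :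
    ∫ p : ℝ × ℝ in Ioi 0 ×ˢ Ioi 0, Complex.exp (A * p.1) * Complex.exp (B * p.2)
      = 1 / (A * B) := by
  rw [Measure.volume_eq_prod, setIntegral_prod_mul (fun x : ℝ => Complex.exp (A * x))
    (fun x : ℝ => Complex.exp (B * x)), integral_exp_mul_complex_Ioi hA,
    integral_exp_mul_complex_Ioi hB]
  simp only [Complex.ofReal_zero, mul_zero, Complex.exp_zero]
  rw [div_mul_div_comm, neg_mul_neg, one_mul]

/-- Change of variables along `edgeMap`: a function that becomes a product of two decaying
exponentials on the quadrant has an explicit integral over the sector. -/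
lemma sector_integral {θm θM : ℝ} (h1 : θm < θM) (h2 : θM - θm < Real.pi) {A B : ℂ}
    (hA : A.re < 0) (hB : B.re < 0) (g : ℝ × ℝ → ℂ)
    (hg : ∀ p : ℝ × ℝ, g (edgeMap θm θM p) = Complex.exp (A * p.1) * Complex.exp (B * p.2)) :
    IntegrableOn g (sector θm θM) ∧
      ∫ p in sector θm θM, g p = Real.sin (θM - θm) / (A * B) := by
  have hpos : 0 < Real.sin (θM - θm) := Real.sin_pos_of_pos_of_lt_pi (by linarith) h2
  have hae := sector_ae_eq h1 h2
  have hQ : MeasurableSet (Ioi (0 : ℝ) ×ˢ Ioi (0 : ℝ)) := measurableSet_Ioi.prod measurableSet_Ioi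
  have hder : ∀ x ∈ Ioi (0 : ℝ) ×ˢ Ioi (0 : ℝ),
      HasFDerivWithinAt (edgeMap θm θM) (edgeMap θm θM) (Ioi (0 : ℝ) ×ˢ Ioi (0 : ℝ)) x :=
    fun x _ => (edgeMap θm θM).hasFDerivWithinAt
  have hinj := (edgeMap_injective hpos).injOn (s := Ioi (0 : ℝ) ×ˢ Ioi (0 : ℝ))
  constructor
  · rw [integrableOn_congr_set_ae hae,
      integrableOn_image_iff_integrableOn_abs_det_fderiv_smul volume hQ hder hinj]
    simp only [hg]
    exact (quadrant_integrableOn hA hB).smul _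
  · rw [setIntegral_congr_set hae,
      integral_image_eq_integral_abs_det_fderiv_smul volume hQ hder hinj]
    simp only [hg]
    rw [integral_smul, quadrant_integral hA hB, edgeMap_det, abs_of_pos hpos]
    simp [div_eq_mul_inv]

/-- The identification of `ℝ × ℝ` with the Euclidean plane. -/
noncomputable def toPlane : ℝ × ℝ ≃ᵐ EuclideanSpace ℝ (Fin 2) :=
  MeasurableEquiv.finTwoArrow.symm.trans (MeasurableEquiv.toLp 2 (Fin 2 → ℝ))

lemma toPlane_apply (p : ℝ × ℝ) : toPlane p = !₂[p.1, p.2] := rfl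

lemma toPlane_measurePreserving : MeasurePreserving toPlane volume volume :=
  (PiLp.volume_preserving_toLp (Fin 2)).comp (volume_preserving_finTwoArrow ℝ).symm

/-- Parseval's identity in the plane: the coordinates of a unit vector in the orthonormal basis `(d, dp)` have
squares summing to `1`. -/
lemma sq_add_sq_eq_one {d0 d1 p0 p1 x y : ℝ} (hd : d0 ^ 2 + d1 ^ 2 = 1)
    (hp : p0 ^ 2 + p1 ^ 2 = 1) (ho : d0 * p0 + d1 * p1 = 0) (hxy : x ^ 2 + y ^ 2 = 1) :
    (x * d0 + y * d1) ^ 2 + (x * p0 + y * p1) ^ 2 = 1 := by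
  -- In the plane, `dp` is `d` rotated by a right angle, up to the sign `k`.
  obtain ⟨k, hk⟩ : ∃ k, k = d0 * p1 - d1 * p0 := ⟨_, rfl⟩
  have e0 : p0 = -k * d1 := by
    rw [hk]; linear_combination (-p0) * hd + d0 * ho
  have e1 : p1 = k * d0 := by
    rw [hk]; linear_combination (-p1) * hd + d1 * ho
  have hk2 : k ^ 2 = 1 := by
    rw [e0, e1] at hp
    linear_combination hp - k ^ 2 * hd
  rw [e0, e1]
  linear_combination (y * d0 - x * d1) ^ 2 * hk2 + (x ^ 2 + y ^ 2) * hd + hxy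

end SectorCGO

open SectorCGO in
/-- Over the infinite open sector `S ⊂ ℝ²` of opening angle
`θ_M - θ_m ∈ (0, π)`, with unit vectors `d ⊥ d⊥` such that `⟪d,x⟫ < 0` on `S \ {0}`
and `τ > 0`, the CGO integral converges absolutely and its modulus equals
`sin(θ_M - θ_m)/τ²`. -/
theorem sector_cgo_integral (θm θM : ℝ) (h1 : θm < θM) (h2 : θM - θm < Real.pi)
    (d dp : EuclideanSpace ℝ (Fin 2)) (hd : ‖d‖ = 1) (hdp : ‖dp‖ = 1)
    (horth : ⟪d, dp⟫ = 0) (τ : ℝ) (hτ : 0 < τ)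
    (S : Set (EuclideanSpace ℝ (Fin 2)))
    (hS : S = {x | ∃ r θ, 0 < r ∧ θ ∈ Set.Icc θm θM ∧
      x 0 = r * Real.cos θ ∧ x 1 = r * Real.sin θ}) :
    (∀ x ∈ S, x ≠ 0 → ⟪d, x⟫ < 0) →
    IntegrableOn
      (fun x => Complex.exp (τ * ((⟪d, x⟫ : ℂ) + Complex.I * (⟪dp, x⟫ : ℂ)))) S volume ∧
    ‖∫ x in S, Complex.exp (τ * ((⟪d, x⟫ : ℂ) + Complex.I * (⟪dp, x⟫ : ℂ)))‖ =
      Real.sin (θM - θm) / τ ^ 2 := by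
  intro hneg
  have inner_eq : ∀ u v : EuclideanSpace ℝ (Fin 2), ⟪u, v⟫ = v 0 * u 0 + v 1 * u 1 := by
    intro u v
    simp [PiLp.inner_apply, Fin.sum_univ_two]
  have hd' : d 0 ^ 2 + d 1 ^ 2 = 1 := by
    have := EuclideanSpace.real_norm_sq_eq d
    rw [hd, Fin.sum_univ_two] at this
    linarith
  have hdp' : dp 0 ^ 2 + dp 1 ^ 2 = 1 := by
    have := EuclideanSpace.real_norm_sq_eq dp
    rw [hdp, Fin.sum_univ_two] at this
    linarith
  have horth' : d 0 * dp 0 + d 1 * dp 1 = 0 := by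
    rw [inner_eq] at horth
    linarith
  have hedge : ∀ θ ∈ Set.Icc θm θM, Real.cos θ * d 0 + Real.sin θ * d 1 < 0 := by
    intro θ hθ
    have := hneg !₂[Real.cos θ, Real.sin θ] (by
      rw [hS]
      exact ⟨1, θ, one_pos, hθ, by simp, by simp⟩) (by
      intro h
      have hc : Real.cos θ = 0 := by simpa using congrArg (fun v => v 0) h
      have hs : Real.sin θ = 0 := by simpa using congrArg (fun v => v 1) h
      have := Real.sin_sq_add_cos_sq θ
      simp [hc, hs] at this)
    rw [inner_eq] at this
    simpa using this
  -- `c θ` encodes `τ (cos θ, sin θ)` in the orthonormal basis `(d, dp)` as a complex number;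
  -- `A` and `B` are `c θm` and `c θM`.
  obtain ⟨c, hc⟩ : ∃ c : ℝ → ℂ, ∀ θ, c θ = ⟨τ * (Real.cos θ * d 0 + Real.sin θ * d 1),
    τ * (Real.cos θ * dp 0 + Real.sin θ * dp 1)⟩ := ⟨_, fun _ => rfl⟩
  have hcre : ∀ θ ∈ Set.Icc θm θM, (c θ).re < 0 := by
    intro θ hθ
    rw [hc]
    exact mul_neg_of_pos_of_neg hτ (hedge θ hθ)
  have hcnorm : ∀ θ, ‖c θ‖ = τ := by
    intro θ
    rw [← sq_eq_sq₀ (norm_nonneg _) hτ.le, Complex.sq_norm, Complex.normSq_apply, hc]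
    linear_combination τ ^ 2 * sq_add_sq_eq_one hd' hdp' horth' (Real.cos_sq_add_sin_sq θ)
  have hpre : toPlane ⁻¹' S = sector θm θM := by
    rw [hS]
    ext p
    simp [toPlane_apply, sector]
  obtain ⟨hint, hval⟩ := sector_integral h1 h2 (hcre θm ⟨le_rfl, h1.le⟩)
    (hcre θM ⟨h1.le, le_rfl⟩) (fun p => Complex.exp (τ * ((⟪d, toPlane p⟫ : ℂ) +
      Complex.I * (⟪dp, toPlane p⟫ : ℂ)))) (by
    intro p
    rw [← Complex.exp_add]
    congr 1
    rw [inner_eq, inner_eq, hc, hc, toPlane_apply, edgeMap_apply]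
    apply Complex.ext
    · simp [-Complex.ofReal_cos, -Complex.ofReal_sin]
      ring
    · simp [-Complex.ofReal_cos, -Complex.ofReal_sin]
      ring)
  rw [← toPlane_measurePreserving.integrableOn_comp_preimage toPlane.measurableEmbedding,
    ← toPlane_measurePreserving.setIntegral_preimage_emb toPlane.measurableEmbedding, hpre]
  refine ⟨hint, ?_⟩
  have hpos : 0 < Real.sin (θM - θm) := Real.sin_pos_of_pos_of_lt_pi (by linarith) h2
  rw [hval, norm_div, norm_mul, hcnorm, hcnorm, Complex.norm_real, Real.norm_of_nonneg hpos.le, sq]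
end

section
/- Let θ_m < θ_M be real with θ_M − θ_m ∈ (0, π) and let S = {(r cos θ, r sin θ) : r > 0, θ ∈ [θ_m, θ_M]} ⊂ ℝ². Let d, d⊥ ∈ ℝ² be unit vectors with ⟪d, d⊥⟫ = 0 and suppose ζ ∈ (0, 1] satisfies ⟪d, x⟫ ≤ −ζ ‖x‖ for all x ∈ S. Let h > 0 and let τ > 0 satisfy ζ τ ≥ 2/e. Then the modulus of the truncated-sector integral satisfies ‖∫_{S ∩ B(0,h)} exp(τ(⟪d, x⟫ + i ⟪d⊥, x⟫)) dx‖ ≥ sin(θ_M − θ_m)/τ² − (2(θ_M − θ_m)/(ζ τ)) · exp(−ζ h τ / 2), where B(0,h) is the open ball of radius h centered at the origin. -/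
/-!
In the plane `dp` is `d` turned by a right angle, so the phase `⟪d, x⟫ + i⟪dp, x⟫` at the point with
polar coordinates `(r, θ)` is `r D exp (iεθ)` with `‖D‖ = 1` and `ε = ±1` (`phase_polar`). The angle
is measured from the bisector of the sector, where it runs over `[-α, α]` with `2α` the opening angle
and the principal argument can be used (`setIntegral_sector_polar`).

With `c = τ D exp (iεθ)`, the radial integral is
`∫₀ʰ r exp (r c) dr = 1 / c² + (h / c - 1 / c²) exp (h c)` (`integral_mul_exp`).
The first term integrates over the angle to a number of modulus `sin (2α) / τ²`
(`norm_integral_inv_sq`). As `‖c‖ = τ ≥ ζτ` and `re c ≤ -ζτ` by the cone condition, the second is at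
most `(h / s + 1 / s²) exp (-s h)` with `s = ζτ`, and the assumption `s ≥ 2 / e` bounds this by
`(2 / s) exp (-s h / 2)` (`tail_bound`). The reverse triangle inequality concludes
(`lower_bound_polar`).
-/

open MeasureTheory Metric
open scoped RealInnerProductSpace

/-! ### Polar coordinates on a sector -/

/-- The identification of `ℂ` with the Euclidean plane which sends `1` to the unit vector of angle
`m`: rotation by `m` followed by `z ↦ (re z, im z)`. With `m` the bisecting angle of a sector, the
sector is pulled back to one symmetric about the positive real axis. -/
noncomputable def rotCoord (m : ℝ) : ℂ ≃ₗᵢ[ℝ] EuclideanSpace ℝ (Fin 2) :=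
  (rotation (Circle.exp m)).trans Complex.orthonormalBasisOneI.repr

lemma rotCoord_zero (m : ℝ) (z : ℂ) :
    rotCoord m z 0 = Real.cos m * z.re - Real.sin m * z.im := by
  simp [rotCoord, Complex.exp_ofReal_mul_I_re, Complex.exp_ofReal_mul_I_im]

lemma rotCoord_one (m : ℝ) (z : ℂ) :
    rotCoord m z 1 = Real.cos m * z.im + Real.sin m * z.re := by
  simp [rotCoord, Complex.exp_ofReal_mul_I_re, Complex.exp_ofReal_mul_I_im]

lemma rotCoord_polar (m r θ : ℝ) (z : ℂ) (hz : z = r * (Complex.cos θ + Complex.sin θ * Complex.I)) :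
    rotCoord m z 0 = r * Real.cos (m + θ) ∧ rotCoord m z 1 = r * Real.sin (m + θ) := by
  have hre : z.re = r * Real.cos θ := by
    simp [hz, ← Complex.ofReal_cos, ← Complex.ofReal_sin]
  have him : z.im = r * Real.sin θ := by
    simp [hz, ← Complex.ofReal_cos, ← Complex.ofReal_sin]
  rw [rotCoord_zero, rotCoord_one, hre, him, Real.cos_add, Real.sin_add]
  constructor <;> ring

/-- Since `α < π`, the symmetric sector avoids the branch cut, so it is described by the principal
argument. -/
lemma preimage_sector (m α h : ℝ) (hα : α < Real.pi) :
    rotCoord m ⁻¹' ({x | ∃ r θ, 0 < r ∧ θ ∈ Set.Icc (m - α) (m + α) ∧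
      x 0 = r * Real.cos θ ∧ x 1 = r * Real.sin θ} ∩ ball 0 h) =
    {z : ℂ | z ≠ 0 ∧ ‖z‖ < h ∧ z.arg ∈ Set.Icc (-α) α} := by
  ext z
  simp only [Set.mem_preimage, Set.mem_inter_iff, mem_ball_zero_iff,
    LinearIsometryEquiv.norm_map, Set.mem_ofPred_eq]
  constructor
  · rintro ⟨⟨r, θ, hr, hθ, h0, h1⟩, hzh⟩
    obtain ⟨e0, e1⟩ := rotCoord_polar m r (θ - m) _ rfl
    rw [add_sub_cancel] at e0 e1
    have hz : z = r * (Complex.cos ((θ - m : ℝ) : ℂ)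
        + Complex.sin ((θ - m : ℝ) : ℂ) * Complex.I) := by
      apply (rotCoord m).injective
      ext i
      fin_cases i
      · exact h0.trans e0.symm
      · exact h1.trans e1.symm
    have harg : z.arg = θ - m := by
      rw [hz]
      exact Complex.arg_mul_cos_add_sin_mul_I hr ⟨by linarith [hθ.1], by linarith [hθ.2]⟩
    refine ⟨?_, hzh, ?_⟩
    · rintro rfl
      have hn := congrArg (‖·‖) hz
      rw [Complex.cos_add_sin_I] at hn
      simp only [norm_zero, norm_mul, Complex.norm_exp_ofReal_mul_I, Complex.norm_real,
        Real.norm_eq_abs, mul_one] at hn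
      exact hr.ne' (abs_eq_zero.1 hn.symm)
    · rw [harg]
      exact ⟨by linarith [hθ.1], by linarith [hθ.2]⟩
  · rintro ⟨hz, hzh, harg⟩
    obtain ⟨e0, e1⟩ := rotCoord_polar m ‖z‖ z.arg z (Complex.norm_mul_cos_add_sin_mul_I z).symm
    exact ⟨⟨‖z‖, m + z.arg, norm_pos_iff.2 hz, ⟨by linarith [harg.1], by linarith [harg.2]⟩,
      e0, e1⟩, hzh⟩

/-- Polar coordinates on the truncated sector. The variable `p` is the pair (angle, radius), with the
angle measured from the bisector. -/
lemma setIntegral_sector_polar (m α h : ℝ) (hα : α < Real.pi)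
    (f : EuclideanSpace ℝ (Fin 2) → ℂ) :
    ∫ x in {x : EuclideanSpace ℝ (Fin 2) | ∃ r θ, 0 < r ∧ θ ∈ Set.Icc (m - α) (m + α) ∧
      x 0 = r * Real.cos θ ∧ x 1 = r * Real.sin θ} ∩ ball 0 h, f x =
    ∫ p in Set.Icc (-α) α ×ˢ Set.Ioo 0 h,
      p.2 • f (rotCoord m (p.2 * (Complex.cos p.1 + Complex.sin p.1 * Complex.I))) := by
  rw [← (rotCoord m).measurePreserving.setIntegral_preimage_emb
    (rotCoord m).toHomeomorph.measurableEmbedding, preimage_sector m α h hα]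
  have hT : MeasurableSet {z : ℂ | z ≠ 0 ∧ ‖z‖ < h ∧ z.arg ∈ Set.Icc (-α) α} := by
    refine (measurableSet_singleton (0 : ℂ)).compl.inter (MeasurableSet.inter ?_ ?_)
    · exact measurableSet_lt measurable_norm measurable_const
    · exact Complex.measurable_arg measurableSet_Icc
  rw [← integral_indicator hT, ← Complex.integral_comp_polarCoord_symm]
  have hR : MeasurableSet (Set.Ioo (0 : ℝ) h ×ˢ Set.Icc (-α) α) :=
    measurableSet_Ioo.prod measurableSet_Icc
  have hsub : Set.Ioo (0 : ℝ) h ×ˢ Set.Icc (-α) α ⊆ polarCoord.target := by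
    rintro ⟨r, θ⟩ ⟨hr, hθ⟩
    exact ⟨hr.1, by linarith [hθ.1], lt_of_le_of_lt hθ.2 hα⟩
  have key : ∀ p ∈ polarCoord.target, p.1 • Set.indicator
      {z : ℂ | z ≠ 0 ∧ ‖z‖ < h ∧ z.arg ∈ Set.Icc (-α) α} (fun z => f (rotCoord m z))
        (Complex.polarCoord.symm p) =
      (Set.Ioo (0 : ℝ) h ×ˢ Set.Icc (-α) α).indicator (fun p : ℝ × ℝ =>
        p.1 • f (rotCoord m (p.1 * (Complex.cos p.2 + Complex.sin p.2 * Complex.I)))) p := by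
    rintro ⟨r, θ⟩ ⟨hr, hθ⟩
    have hr' : 0 < r := hr
    have hθ' : θ ∈ Set.Ioc (-Real.pi) Real.pi := ⟨hθ.1, hθ.2.le⟩
    have hz : Complex.polarCoord.symm (r, θ) =
        r * (Complex.cos θ + Complex.sin θ * Complex.I) := by
      simp [Complex.polarCoord_symm_apply]
    have hn : ‖(r : ℂ) * (Complex.cos θ + Complex.sin θ * Complex.I)‖ = r := by
      rw [Complex.cos_add_sin_I, norm_mul, Complex.norm_exp_ofReal_mul_I, Complex.norm_real,
        Real.norm_of_nonneg hr'.le, mul_one]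
    have ha := Complex.arg_mul_cos_add_sin_mul_I hr' hθ'
    have hne : (r : ℂ) * (Complex.cos θ + Complex.sin θ * Complex.I) ≠ 0 := by
      rw [← norm_pos_iff, hn]; exact hr'
    rw [hz]
    by_cases hp : r < h ∧ θ ∈ Set.Icc (-α) α
    · rw [Set.indicator_of_mem, Set.indicator_of_mem]
      · exact ⟨⟨hr', hp.1⟩, hp.2⟩
      · refine ⟨hne, ?_, ?_⟩
        · rw [hn]; exact hp.1
        · rw [ha]; exact hp.2
    · rw [Set.indicator_of_notMem, Set.indicator_of_notMem, smul_zero]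
      · rintro ⟨q1, q2⟩
        exact hp ⟨q1.2, q2⟩
      · rintro ⟨-, q1, q2⟩
        rw [hn] at q1
        rw [ha] at q2
        exact hp ⟨q1, q2⟩
  rw [setIntegral_congr_fun polarCoord.open_target.measurableSet key,
    setIntegral_indicator hR, Set.inter_eq_self_of_subset_right hsub, Measure.volume_eq_prod,
    ← setIntegral_prod_swap]
  rfl

/-! ### The radial and angular integrals -/

/-- The radial integral; an antiderivative of the integrand is `(r / c - 1 / c ^ 2) exp (r c)`. -/
lemma integral_mul_exp (c : ℂ) (hc : c ≠ 0) (h : ℝ) :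
    ∫ r in (0 : ℝ)..h, (r : ℂ) * Complex.exp (r * c) =
      1 / c ^ 2 + (h / c - 1 / c ^ 2) * Complex.exp (h * c) := by
  have hderiv : ∀ x ∈ Set.uIcc 0 h, HasDerivAt
      (fun r : ℝ => ((r : ℂ) / c - 1 / c ^ 2) * Complex.exp (r * c))
      ((x : ℂ) * Complex.exp (x * c)) x := by
    intro x _
    have hx := Complex.ofRealCLM.hasDerivAt (x := x)
    have h1 := ((hx.div_const c).sub_const (1 / c ^ 2)).mul ((hx.mul_const c).cexp)
    refine HasDerivAt.congr_deriv h1 ?_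
    simp only [Complex.ofRealCLM_apply, Complex.ofReal_one]
    field_simp
    ring
  rw [intervalIntegral.integral_eq_sub_of_hasDerivAt hderiv
    (Continuous.intervalIntegrable (by fun_prop) _ _)]
  simp
  ring

/-- With `u = s h / 2`, the claim reduces to `u + 1 / 2 ≤ s * exp u`. It follows from
`u + 1 / 2 ≤ exp (u - 1 / 2)` and `s * exp (1 / 2) ≥ 1`, the latter because `s * e ≥ 2 ≥ exp (1 / 2)`. -/
lemma tail_bound (s h : ℝ) (hs : 2 / Real.exp 1 ≤ s) (hh : 0 < h) :
    (h / s + 1 / s ^ 2) * Real.exp (-(s * h)) ≤ 2 / s * Real.exp (-(s * h) / 2) := by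
  have he := Real.exp_pos 1
  have hs0 : 0 < s := lt_of_lt_of_le (by positivity) hs
  have hes : 2 ≤ s * Real.exp 1 := (div_le_iff₀ he).1 hs
  have hhalf : Real.exp 1 = Real.exp (1 / 2) ^ 2 := by
    rw [← Real.exp_nat_mul]; norm_num
  have h2 : Real.exp (1 / 2) ≤ 2 := by
    nlinarith [Real.exp_one_lt_d9, Real.exp_pos (1 / 2)]
  have key : s * h + 1 ≤ 2 * s * Real.exp (s * h / 2) := by
    have e1 := Real.add_one_le_exp (s * h / 2 - 1 / 2)
    have e2 : Real.exp (s * h / 2) = Real.exp (1 / 2) * Real.exp (s * h / 2 - 1 / 2) := by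
      rw [← Real.exp_add]; ring_nf
    have e3 : 1 ≤ s * Real.exp (1 / 2) := by
      have : 2 ≤ (s * Real.exp (1 / 2)) * Real.exp (1 / 2) := by
        rw [hhalf] at hes; linarith
      nlinarith [mul_pos hs0 (Real.exp_pos (1 / 2))]
    have e4 : 1 * Real.exp (s * h / 2 - 1 / 2) ≤
        s * Real.exp (1 / 2) * Real.exp (s * h / 2 - 1 / 2) :=
      mul_le_mul_of_nonneg_right e3 (Real.exp_pos _).le
    rw [e2]
    linarith
  have e5 : Real.exp (-(s * h) / 2) = Real.exp (s * h / 2) * Real.exp (-(s * h)) := by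
    rw [← Real.exp_add]; ring_nf
  rw [e5, ← mul_assoc]
  refine mul_le_mul_of_nonneg_right ?_ (Real.exp_pos _).le
  have : h / s + 1 / s ^ 2 = (s * h + 1) / s ^ 2 := by field_simp
  rw [this, div_le_iff₀ (by positivity)]
  refine key.trans (le_of_eq ?_)
  field_simp

/-- The angular integral of the leading term: `exp (-2iεθ)` integrates to `sin (2α)` over `[-α, α]`,
and all remaining factors have constant modulus. -/
lemma norm_integral_inv_sq (D : ℂ) (hD : ‖D‖ = 1) (ε : ℝ) (hε : ε = 1 ∨ ε = -1) (τ α : ℝ)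
    (hτ : 0 < τ) (hs : 0 ≤ Real.sin (2 * α)) :
    ‖∫ θ in (-α)..α, 1 / ((τ : ℂ) * (D * Complex.exp (ε * θ * Complex.I))) ^ 2‖ =
      Real.sin (2 * α) / τ ^ 2 := by
  have hε0 : (-2 * ε * Complex.I : ℂ) ≠ 0 := by
    rcases hε with rfl | rfl <;> simp
  have hfun : ∀ θ : ℝ, 1 / ((τ : ℂ) * (D * Complex.exp (ε * θ * Complex.I))) ^ 2 =
      1 / ((τ : ℂ) * D) ^ 2 * Complex.exp ((-2 * ε * Complex.I : ℂ) * θ) := by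
    intro θ
    have : Complex.exp ((-2 * ε * Complex.I : ℂ) * θ) =
        (Complex.exp (ε * θ * Complex.I) ^ 2)⁻¹ := by
      rw [← Complex.exp_nat_mul, ← Complex.exp_neg]
      congr 1
      push_cast
      ring
    rw [this]
    simp only [one_div, ← mul_inv, ← mul_pow, mul_assoc]
  have hval : ∫ θ in (-α)..α, Complex.exp ((-2 * ε * Complex.I : ℂ) * θ) =
      (Real.sin (2 * α) : ℝ) := by
    rw [integral_exp_mul_complex hε0, Complex.ofReal_sin, Complex.sin]
    rcases hε with rfl | rfl
    · field_simp
      push_cast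
      ring_nf
      simp
    · field_simp
      push_cast
      ring_nf
      simp
  simp_rw [hfun]
  rw [intervalIntegral.integral_const_mul, hval, norm_mul, Complex.norm_real,
    Real.norm_of_nonneg hs, norm_div, norm_pow, norm_mul, hD, Complex.norm_real,
    Real.norm_of_nonneg hτ.le, norm_one]
  ring

/-- The lower bound in polar coordinates: the leading term `1 / c ^ 2` of the radial integral gives
the sine, and the decay `re c ≤ -ζτ` controls the other term. -/
lemma lower_bound_polar (D : ℂ) (hD : ‖D‖ = 1) (ε : ℝ) (hε : ε = 1 ∨ ε = -1)
    (ζ τ h α : ℝ) (hζ : ζ ∈ Set.Ioc (0 : ℝ) 1) (hh : 0 < h) (hτ : 0 < τ)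
    (hτe : 2 / Real.exp 1 ≤ ζ * τ) (hα : 0 < α) (hs : 0 ≤ Real.sin (2 * α))
    (hre : ∀ θ ∈ Set.Icc (-α) α, (D * Complex.exp (ε * θ * Complex.I)).re ≤ -ζ) :
    Real.sin (2 * α) / τ ^ 2 - (2 * (2 * α) / (ζ * τ)) * Real.exp (-(ζ * h * τ) / 2) ≤
      ‖∫ p in Set.Icc (-α) α ×ˢ Set.Ioo 0 h, (p.2 : ℂ) * Complex.exp (p.2 *
        ((τ : ℂ) * (D * Complex.exp (ε * p.1 * Complex.I))))‖ := by
  set c : ℝ → ℂ := fun θ => (τ : ℂ) * (D * Complex.exp (ε * θ * Complex.I)) with hcdef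
  have hcc : Continuous c := by fun_prop
  have hcn : ∀ θ, ‖c θ‖ = τ := by
    intro θ
    simp only [hcdef]
    rw [norm_mul, norm_mul, hD, ← Complex.ofReal_mul, Complex.norm_exp_ofReal_mul_I,
      Complex.norm_real, Real.norm_of_nonneg hτ.le]
    ring
  have hc0 : ∀ θ, c θ ≠ 0 := fun θ => by rw [← norm_pos_iff, hcn]; exact hτ
  have hs0 : 0 < ζ * τ := mul_pos hζ.1 hτ
  have hint : IntegrableOn (fun p : ℝ × ℝ => (p.2 : ℂ) * Complex.exp (p.2 * c p.1))
      (Set.Icc (-α) α ×ˢ Set.Ioo 0 h) (volume.prod volume) := by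
    refine IntegrableOn.mono_set (t := Set.Icc (-α) α ×ˢ Set.Icc 0 h) ?_
      (Set.prod_mono le_rfl Set.Ioo_subset_Icc_self)
    exact ContinuousOn.integrableOn_compact (isCompact_Icc.prod isCompact_Icc)
      (by fun_prop)
  have hfub : ∫ p in Set.Icc (-α) α ×ˢ Set.Ioo 0 h, (p.2 : ℂ) * Complex.exp (p.2 * c p.1) =
      ∫ θ in (-α)..α, (1 / c θ ^ 2 + (h / c θ - 1 / c θ ^ 2) * Complex.exp (h * c θ)) := by
    rw [Measure.volume_eq_prod, setIntegral_prod _ hint,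
      intervalIntegral.integral_of_le (by linarith), integral_Icc_eq_integral_Ioc]
    congr 1
    funext θ
    rw [← integral_mul_exp (c θ) (hc0 θ) h, intervalIntegral.integral_of_le hh.le,
      integral_Ioc_eq_integral_Ioo]
  have hi1 : IntervalIntegrable (fun θ => 1 / c θ ^ 2) volume (-α) α :=
    (continuous_const.div (hcc.pow 2) fun θ => pow_ne_zero 2 (hc0 θ)).intervalIntegrable _ _
  have hi2 : IntervalIntegrable (fun θ => (h / c θ - 1 / c θ ^ 2) * Complex.exp (h * c θ))
      volume (-α) α := by
    refine Continuous.intervalIntegrable (Continuous.mul ?_ (by fun_prop)) _ _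
    exact (continuous_const.div hcc hc0).sub
      (continuous_const.div (hcc.pow 2) fun θ => pow_ne_zero 2 (hc0 θ))
  have htail : ‖∫ θ in (-α)..α, (h / c θ - 1 / c θ ^ 2) * Complex.exp (h * c θ)‖ ≤
      2 / (ζ * τ) * Real.exp (-(ζ * τ * h) / 2) * |α - -α| := by
    apply intervalIntegral.norm_integral_le_of_norm_le_const
    intro θ hθ
    rw [Set.uIoc_of_le (by linarith)] at hθ
    refine le_trans ?_ (tail_bound (ζ * τ) h hτe hh)
    rw [norm_mul]
    -- `‖c‖ = τ ≥ ζτ` lets `h / c` and `1 / c ^ 2` be bounded with `ζτ` in place of `c`.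
    have hle : ζ * τ ≤ τ := by nlinarith [hζ.2]
    have hcre : (c θ).re ≤ -(ζ * τ) := by
      have := hre θ ⟨hθ.1.le, hθ.2⟩
      simp only [hcdef]
      rw [Complex.re_ofReal_mul]
      nlinarith
    refine mul_le_mul ?_ ?_ (norm_nonneg _) (by positivity)
    · refine (norm_sub_le _ _).trans ?_
      rw [norm_div, norm_div, norm_pow, hcn, Complex.norm_real, Real.norm_of_nonneg hh.le,
        norm_one]
      gcongr
    · rw [Complex.norm_exp, Complex.re_ofReal_mul]
      apply Real.exp_le_exp.2
      nlinarith
  have hmain := norm_integral_inv_sq D hD ε hε τ α hτ hs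
  rw [hfub, intervalIntegral.integral_add hi1 hi2, ← hmain]
  have htri := norm_sub_le_norm_add (∫ θ in (-α)..α, 1 / c θ ^ 2)
    (∫ θ in (-α)..α, (h / c θ - 1 / c θ ^ 2) * Complex.exp (h * c θ))
  refine le_trans (sub_le_sub_left (htail.trans (le_of_eq ?_)) _) htri
  rw [abs_of_nonneg (by linarith)]
  ring_nf

lemma inner_fin_two (a b : EuclideanSpace ℝ (Fin 2)) : ⟪a, b⟫ = a 0 * b 0 + a 1 * b 1 := by
  simp [PiLp.inner_apply, Fin.sum_univ_two, mul_comm]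

/-! ### The phase in polar coordinates -/

/-- In the plane, `dp` is `d` turned by a right angle, counterclockwise (`ε = 1`) or clockwise
(`ε = -1`). -/
lemma exists_orientation (d dp : EuclideanSpace ℝ (Fin 2)) (hd : ‖d‖ = 1) (hdp : ‖dp‖ = 1)
    (horth : ⟪d, dp⟫ = 0) :
    ∃ ε : ℝ, (ε = 1 ∨ ε = -1) ∧ dp 0 = -ε * d 1 ∧ dp 1 = ε * d 0 := by
  have e1 : d 0 * d 0 + d 1 * d 1 = 1 := by
    rw [← inner_fin_two, real_inner_self_eq_norm_sq, hd, one_pow]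
  have e2 : dp 0 * dp 0 + dp 1 * dp 1 = 1 := by
    rw [← inner_fin_two, real_inner_self_eq_norm_sq, hdp, one_pow]
  rw [inner_fin_two] at horth
  refine ⟨d 0 * dp 1 - d 1 * dp 0, mul_self_eq_one_iff.1 ?_, ?_, ?_⟩
  · linear_combination e1 * (dp 0 * dp 0 + dp 1 * dp 1) + e2 - horth * (d 0 * dp 0 + d 1 * dp 1)
  · linear_combination (-dp 0) * e1 + d 0 * horth
  · linear_combination (-dp 1) * e1 + d 1 * horth

/-- The phase `⟪d, x⟫ + i⟪dp, x⟫` is, up to a unit factor, the complex coordinate of `x` (`ε = 1`) or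
its conjugate (`ε = -1`). -/
lemma phase_polar (d dp : EuclideanSpace ℝ (Fin 2)) (ε : ℝ) (hε : ε = 1 ∨ ε = -1)
    (h0 : dp 0 = -ε * d 1) (h1 : dp 1 = ε * d 0) (m r θ : ℝ) :
    ((⟪d, rotCoord m (r * (Complex.cos θ + Complex.sin θ * Complex.I))⟫ : ℝ) : ℂ) +
      Complex.I * (⟪dp, rotCoord m (r * (Complex.cos θ + Complex.sin θ * Complex.I))⟫ : ℝ) =
    r * (((d 0 - ε * d 1 * Complex.I) * Complex.exp (ε * m * Complex.I)) *
      Complex.exp (ε * θ * Complex.I)) := by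
  obtain ⟨e0, e1⟩ := rotCoord_polar m r θ _ rfl
  rw [inner_fin_two, inner_fin_two, e0, e1, h0, h1, mul_assoc (_ - _), ← Complex.exp_add]
  have : Complex.exp (ε * m * Complex.I + ε * θ * Complex.I) =
      Complex.cos (m + θ) + ε * Complex.sin (m + θ) * Complex.I := by
    rcases hε with rfl | rfl
    · rw [← add_mul, ← mul_add, Complex.exp_mul_I]
      simp
    · rw [← add_mul, ← mul_add, Complex.exp_mul_I]
      simp [-neg_add_rev]
  rw [this]
  have hεε : (ε : ℂ) * ε = 1 := by rcases hε with rfl | rfl <;> simp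
  push_cast
  linear_combination (-r * d 1 * Complex.sin (m + θ)) * hεε + (r * d 1 * ε * ε * Complex.sin (m + θ)) * Complex.I_sq

/-! ### The lower bound -/

/-- Lower bound for the CGO integral over the truncated sector
`S ∩ B(0,h)`: if `⟪d,x⟫ ≤ -ζ‖x‖` on `S`, `h > 0`, `ζτ ≥ 2/e`, then
`‖∫_{S ∩ B(0,h)} u₀‖ ≥ sin(θ_M-θ_m)/τ² - (2(θ_M-θ_m)/(ζτ)) exp(-ζhτ/2)`. -/
theorem truncated_sector_cgo_lower_bound (θm θM : ℝ) (h1 : θm < θM)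
    (h2 : θM - θm < Real.pi)
    (d dp : EuclideanSpace ℝ (Fin 2)) (hd : ‖d‖ = 1) (hdp : ‖dp‖ = 1)
    (horth : ⟪d, dp⟫ = 0)
    (S : Set (EuclideanSpace ℝ (Fin 2)))
    (hS : S = {x | ∃ r θ, 0 < r ∧ θ ∈ Set.Icc θm θM ∧
      x 0 = r * Real.cos θ ∧ x 1 = r * Real.sin θ})
    (ζ : ℝ) (hζ : ζ ∈ Set.Ioc (0 : ℝ) 1)
    (hcone : ∀ x ∈ S, ⟪d, x⟫ ≤ -ζ * ‖x‖)
    (h τ : ℝ) (hh : 0 < h) (hτ : 0 < τ) (hτe : 2 / Real.exp 1 ≤ ζ * τ) :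
    Real.sin (θM - θm) / τ ^ 2 - (2 * (θM - θm) / (ζ * τ)) * Real.exp (-(ζ * h * τ) / 2) ≤
      ‖∫ x in S ∩ ball (0 : EuclideanSpace ℝ (Fin 2)) h,
        Complex.exp (τ * ((⟪d, x⟫ : ℂ) + Complex.I * (⟪dp, x⟫ : ℂ)))‖ := by
  subst hS
  obtain ⟨ε, hε, hp0, hp1⟩ := exists_orientation d dp hd hdp horth
  set m := (θm + θM) / 2 with hm
  set α := (θM - θm) / 2 with hα
  have hmin : θm = m - α := by rw [hm, hα]; ring
  have hmax : θM = m + α := by rw [hm, hα]; ring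
  have h2α : θM - θm = 2 * α := by rw [hα]; ring
  have hα0 : 0 < α := by linarith
  have hαpi : α < Real.pi := by linarith
  set D : ℂ := (d 0 - ε * d 1 * Complex.I) * Complex.exp (ε * m * Complex.I) with hDdef
  have hD : ‖D‖ = 1 := by
    have hsq : d 0 * d 0 + d 1 * d 1 = 1 := by
      rw [← inner_fin_two, real_inner_self_eq_norm_sq, hd, one_pow]
    have hεε : ε * ε = 1 := by rcases hε with rfl | rfl <;> norm_num
    rw [hDdef, norm_mul, ← Complex.ofReal_mul ε m, Complex.norm_exp_ofReal_mul_I, mul_one,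
      Complex.norm_def, Real.sqrt_eq_one, Complex.normSq_apply]
    simp
    linear_combination hsq + d 1 * d 1 * hεε
  have hre : ∀ θ ∈ Set.Icc (-α) α, (D * Complex.exp (ε * θ * Complex.I)).re ≤ -ζ := by
    intro θ hθ
    -- The cone condition is tested at the point of angle `m + θ` on the unit circle.
    have hph := congrArg Complex.re (phase_polar d dp ε hε hp0 hp1 m 1 θ)
    obtain ⟨e0, e1⟩ := rotCoord_polar m 1 θ _ rfl
    have hx := hcone _ ⟨1, m + θ, one_pos, ⟨by linarith [hθ.1], by linarith [hθ.2]⟩, e0, e1⟩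
    rw [LinearIsometryEquiv.norm_map, Complex.cos_add_sin_I, norm_mul,
      Complex.norm_exp_ofReal_mul_I, Complex.norm_real, norm_one, ← Complex.cos_add_sin_I] at hx
    simp only [Complex.ofReal_one, one_mul] at hph hx
    rw [← hDdef] at hph
    rw [← hph]
    simpa using hx
  have hs : 0 ≤ Real.sin (2 * α) :=
    Real.sin_nonneg_of_nonneg_of_le_pi (by linarith) (by linarith)
  have main := lower_bound_polar D hD ε hε ζ τ h α hζ hh hτ hτe hα0 hs hre
  rw [h2α]
  refine main.trans (le_of_eq (congrArg _ ?_))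
  rw [hmin, hmax, setIntegral_sector_polar m α h hαpi]
  congr 1
  funext p
  rw [phase_polar d dp ε hε hp0 hp1, Complex.real_smul, ← hDdef]
  congr 2
  ring
end

section
/- Let v₀ ∈ ℝ³ be nonzero, θ₀ ∈ (0, π/2), and let C = {x ∈ ℝ³ : ⟪x, v₀⟫ ≥ cos θ₀ ‖x‖ ‖v₀‖} be the infinite circular cone with apex at the origin, axis v₀ and half-opening angle θ₀. Set d = −v₀/‖v₀‖ and let d⊥ ∈ ℝ³ be any unit vector with ⟪d, d⊥⟫ = 0, and let τ > 0. Then the integral ∫_C exp(τ(⟪d, x⟫ + i ⟪d⊥, x⟫)) dx converges absolutely and equals the positive real number 2π cos θ₀ sin² θ₀ / τ³. -/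
/-!
Let `e = -d = v₀/‖v₀‖`. In cylindrical coordinates `t = ⟪e, x⟫ ∈ ℝ`, `z ∈ ℂ` with
`re z = ⟪d⊥, x⟫`, the cone becomes `{k ‖z‖ ≤ t}` with `k = cot θ₀`, and the integrand becomes
`exp (-τ t + i τ re z)`. Its modulus is `exp (-τ t)`, so integrating over `t ≥ k ‖z‖` first
leaves `τ⁻¹ exp (-τ k ‖z‖)`, which is integrable over the plane; this gives absolute convergence
and allows Fubini. The value of the integral is thus
`τ⁻¹ ∫_ℂ exp (-τ k ‖z‖ + i τ re z) dz` (`solid`).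

In polar coordinates the planar integral has the radial part
`∫₀^∞ r exp (-w r) dr = w⁻²` with `w = τ (k - i cos φ)`, leaving (`integral_plane`)
`τ⁻² ∫_{-π}^{π} (k - i cos φ)⁻² dφ`. With `s² = k² + 1`, the substitution `z = exp (i φ)` turns
this last integral into a contour integral with a double pole at `i (s - k)` inside the unit
circle, whose value is `2π k / s³` (`integral_inv_sq_sub_I_mul_cos`). For `k = cot θ₀`,
`s = 1 / sin θ₀`, this is `2π cos θ₀ sin² θ₀`.
-/

open MeasureTheory
open scoped RealInnerProductSpace

/-- Writing `z = exp (i φ)`, one has `k - i cos φ = -(i / 2z) (z - α) (z - β)` with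
`α = i (s - k)` inside and `β = -i (s + k)` outside the unit circle, so the value comes from
Cauchy's formula for the derivative of `4 i z / (z - β)²` at `α`. -/
lemma integral_inv_sq_sub_I_mul_cos {k s : ℝ} (hk : 0 < k) (hs : 0 < s) (h : s ^ 2 = k ^ 2 + 1) :
    ∫ φ in (-Real.pi)..Real.pi, (((k : ℂ) - Complex.I * (Real.cos φ : ℂ)) ^ 2)⁻¹ =
      2 * Real.pi * k / s ^ 3 := by
  have hper : Function.Periodic
      (fun φ : ℝ => (((k : ℂ) - Complex.I * (Real.cos φ : ℂ)) ^ 2)⁻¹) (2 * Real.pi) := by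
    intro φ
    simp only [Real.cos_add_two_pi]
  have hshift := hper.intervalIntegral_add_eq (-Real.pi) 0
  rw [show -Real.pi + 2 * Real.pi = Real.pi by ring, zero_add] at hshift
  rw [hshift]
  have hsC : (s : ℂ) ^ 2 = k ^ 2 + 1 := by exact_mod_cast h
  have hs0 : (s : ℂ) ≠ 0 := by exact_mod_cast hs.ne'
  have hI : Complex.I ^ 2 = -1 := Complex.I_sq
  set α : ℂ := Complex.I * ((s - k : ℝ) : ℂ) with hα
  set β : ℂ := -Complex.I * ((s + k : ℝ) : ℂ) with hβ
  -- `0 < s - k < 1 < s + k`, because `(s - k) (s + k) = 1` and `k > 0`.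
  have hnα : ‖α‖ < 1 := by
    rw [hα, norm_mul, Complex.norm_I, one_mul, Complex.norm_real, Real.norm_eq_abs, abs_lt]
    constructor <;> nlinarith
  have hnβ : 1 < ‖β‖ := by
    rw [hβ, norm_mul, norm_neg, Complex.norm_I, one_mul, Complex.norm_real, Real.norm_eq_abs,
      abs_of_pos (by positivity)]
    nlinarith
  have hU : Metric.closedBall (0 : ℂ) 1 ⊆ {β}ᶜ := by
    intro z hz hzβ
    rw [Set.mem_singleton_iff] at hzβ
    rw [hzβ, mem_closedBall_zero_iff] at hz
    linarith
  have hder : ∀ z ∈ ({β}ᶜ : Set ℂ), HasDerivAt (fun z : ℂ => 4 * Complex.I * z / (z - β) ^ 2)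
      ((4 * Complex.I * (z - β) ^ 2 - 4 * Complex.I * z * (2 * (z - β))) / ((z - β) ^ 2) ^ 2) z := by
    intro z hz
    have hz' : (z - β) ^ 2 ≠ 0 := pow_ne_zero _ (sub_ne_zero.mpr hz)
    have h1 : HasDerivAt (fun z : ℂ => 4 * Complex.I * z) (4 * Complex.I) z := by
      simpa using (hasDerivAt_id z).const_mul (4 * Complex.I)
    have h2 : HasDerivAt (fun z : ℂ => (z - β) ^ 2) (2 * (z - β)) z := by
      simpa using! ((hasDerivAt_id z).sub_const β).pow 2
    exact h1.div h2 hz'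
  have key := Complex.two_pi_I_inv_smul_circleIntegral_sub_sq_inv_smul_of_differentiable
    (isOpen_compl_singleton (x := β)) hU
    (fun z hz => (hder z hz).differentiableAt.differentiableWithinAt)
    (mem_ball_zero_iff.mpr hnα)
  have hαU : α ∈ ({β}ᶜ : Set ℂ) :=
    hU (Metric.ball_subset_closedBall (mem_ball_zero_iff.mpr hnα))
  rw [(hder α hαU).deriv, smul_eq_mul, inv_mul_eq_iff_eq_mul₀ Complex.two_pi_I_ne_zero] at key
  have hαβ : α - β = 2 * Complex.I * s := by
    rw [hα, hβ]; push_cast; ring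
  have hcirc : (∮ z in C(0, 1), ((z - α) ^ 2)⁻¹ • (4 * Complex.I * z / (z - β) ^ 2)) =
      ∫ φ in (0 : ℝ)..(2 * Real.pi), (((k : ℂ) - Complex.I * (Real.cos φ : ℂ)) ^ 2)⁻¹ := by
    rw [circleIntegral]
    refine intervalIntegral.integral_congr fun φ _ => ?_
    simp only [deriv_circleMap, smul_eq_mul]
    set z := circleMap 0 1 φ with hz
    have hze : z = Complex.exp (φ * Complex.I) := by simp [hz, circleMap]
    have hz0 : z ≠ 0 := by rw [hze]; exact Complex.exp_ne_zero _
    have hcos : (Real.cos φ : ℂ) = (z + z⁻¹) / 2 := by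
      rw [Complex.ofReal_cos, Complex.cos, hze, ← Complex.exp_neg]
      congr 3; ring_nf
    have hfac : (k : ℂ) - Complex.I * (Real.cos φ : ℂ) =
        -Complex.I / (2 * z) * ((z - α) * (z - β)) := by
      rw [hcos, hα, hβ]
      field_simp
      push_cast
      linear_combination (-Complex.I*(s-k)*(s+k) + 2*z*k) * hI + Complex.I * hsC
    rw [hfac]
    have : (-Complex.I / (2 * z) * ((z - α) * (z - β))) ^ 2 =
        -1 / (4 * z ^ 2) * ((z - α) ^ 2 * (z - β) ^ 2) := by
      rw [mul_pow, div_pow, neg_sq, hI]; ring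
    rw [this, mul_inv, mul_inv, inv_div]
    simp only [div_eq_mul_inv]
    linear_combination (4 * z ^ 2 * ((z - α) ^ 2)⁻¹ * ((z - β) ^ 2)⁻¹) * hI
  rw [← hcirc, key, hαβ, hα]
  field_simp
  push_cast
  ring

lemma tendsto_mul_exp_neg_mul {c : ℝ} (hc : 0 < c) :
    Filter.Tendsto (fun r : ℝ => r * Real.exp (-(c * r))) Filter.atTop (nhds 0) := by
  simpa using tendsto_rpow_mul_exp_neg_mul_atTop_nhds_zero 1 c hc

lemma integrableOn_mul_exp_neg_mul {c : ℝ} (hc : 0 < c) :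
    IntegrableOn (fun r : ℝ => r * Real.exp (-(c * r))) (Set.Ioi 0) := by
  have := integrableOn_rpow_mul_exp_neg_mul_rpow (s := 1) (p := 1) (by norm_num) one_pos hc
  simpa using this

lemma norm_mul_cexp (w : ℂ) {r : ℝ} (hr : 0 ≤ r) :
    ‖(r : ℂ) * Complex.exp (-(w * r))‖ = r * Real.exp (-(w.re * r)) := by
  rw [norm_mul, Complex.norm_real, Real.norm_of_nonneg hr, Complex.norm_exp]
  simp

lemma integral_mul_cexp {w : ℂ} (hw : 0 < w.re) :
    ∫ r in Set.Ioi (0 : ℝ), (r : ℂ) * Complex.exp (-(w * r)) = (w ^ 2)⁻¹ := by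
  have hw0 : w ≠ 0 := fun h => by simp [h] at hw
  -- The antiderivative `-(r / w + 1 / w²) exp (-w r)` vanishes at infinity.
  have hF : ∀ r : ℝ, HasDerivAt
      (fun r : ℝ => -(w⁻¹ * (r * Complex.exp (-(w * r))) + (w ^ 2)⁻¹ * Complex.exp (-(w * r))))
      ((r : ℂ) * Complex.exp (-(w * r))) r := by
    intro r
    have h1 : HasDerivAt (fun r : ℝ => (r : ℂ)) 1 r := Complex.ofRealCLM.hasDerivAt
    have h2 := ((h1.const_mul w).neg).cexp
    have h3 := (((h1.mul h2).const_mul w⁻¹).add (h2.const_mul (w ^ 2)⁻¹)).neg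
    convert! h3 using 1
    change _ = -(w⁻¹ * (1 * Complex.exp (-(w * r)) + r * (Complex.exp (-(w * r)) * -(w * 1))) +
      (w ^ 2)⁻¹ * (Complex.exp (-(w * r)) * -(w * 1)))
    field_simp
    ring
  have hexp : Filter.Tendsto (fun r : ℝ => Complex.exp (-(w * r))) Filter.atTop (nhds 0) := by
    rw [Complex.tendsto_exp_nhds_zero_iff]
    simpa using Filter.tendsto_id.const_mul_atTop hw
  have hrexp : Filter.Tendsto (fun r : ℝ => (r : ℂ) * Complex.exp (-(w * r)))
      Filter.atTop (nhds 0) := by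
    rw [tendsto_zero_iff_norm_tendsto_zero]
    refine (tendsto_mul_exp_neg_mul hw).congr' ?_
    filter_upwards [Filter.eventually_ge_atTop 0] with r hr
    rw [norm_mul_cexp w hr]
  have hint : IntegrableOn (fun r : ℝ => (r : ℂ) * Complex.exp (-(w * r))) (Set.Ioi 0) := by
    refine (integrable_norm_iff (by fun_prop)).mp ?_
    refine (integrableOn_mul_exp_neg_mul hw).congr_fun (fun r hr => ?_) measurableSet_Ioi
    exact (norm_mul_cexp w (le_of_lt hr)).symm
  rw [integral_Ioi_of_hasDerivAt_of_tendsto (hF 0).continuousAt.continuousWithinAt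
    (fun r _ => hF r) hint
    (by simpa using ((hrexp.const_mul w⁻¹).add (hexp.const_mul (w ^ 2)⁻¹)).neg)]
  simp

lemma integrable_exp_neg_mul_norm {c : ℝ} (hc : 0 < c) :
    Integrable (fun z : ℂ => Real.exp (-(c * ‖z‖))) := by
  rw [integrable_fun_norm_addHaar volume (f := fun r => Real.exp (-(c * r)))]
  simpa [Complex.finrank_real_complex] using integrableOn_mul_exp_neg_mul hc

/-- The two-dimensional Fourier transform of `exp (-τ k ‖z‖)` at a frequency of length `τ`. -/
lemma integral_plane {k s τ : ℝ} (hk : 0 < k) (hs : 0 < s) (h : s ^ 2 = k ^ 2 + 1) (hτ : 0 < τ) :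
    ∫ z : ℂ, Complex.exp (-(τ * (k * ‖z‖ : ℝ)) + τ * Complex.I * (z.re : ℂ)) =
      2 * Real.pi * k / (τ ^ 2 * s ^ 3) := by
  rw [← Complex.integral_comp_polarCoord_symm, polarCoord_target]
  have hpt : ∀ p ∈ Set.Ioi (0 : ℝ) ×ˢ Set.Ioo (-Real.pi) Real.pi,
      p.1 • Complex.exp (-(τ * (k * ‖Complex.polarCoord.symm p‖ : ℝ)) +
        τ * Complex.I * ((Complex.polarCoord.symm p).re : ℂ)) =
      (p.1 : ℂ) * Complex.exp (-(τ * (k - Complex.I * (Real.cos p.2 : ℂ)) * p.1)) := by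
    rintro ⟨r, φ⟩ ⟨hr, -⟩
    have hr' : (0 : ℝ) < r := hr
    rw [Complex.norm_polarCoord_symm, abs_of_pos hr', Complex.real_smul]
    congr 2
    simp [Complex.polarCoord_symm_apply]
    ring
  have hre : ∀ φ : ℝ, ((τ : ℂ) * (k - Complex.I * (Real.cos φ : ℂ))).re = τ * k := by
    intro φ
    simp [Complex.cos_ofReal_re]
  rw [setIntegral_congr_fun (measurableSet_Ioi.prod measurableSet_Ioo) hpt,
    -- The swap puts the radial integral inside, where it can be evaluated in closed form.
    Measure.volume_eq_prod, ← setIntegral_prod_swap, setIntegral_prod]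
  · simp only [Prod.swap_prod_mk]
    have : ∀ φ : ℝ, ∫ r in Set.Ioi (0 : ℝ),
        (r : ℂ) * Complex.exp (-(τ * (k - Complex.I * (Real.cos φ : ℂ)) * r)) =
        ((τ : ℂ) ^ 2)⁻¹ * ((k - Complex.I * (Real.cos φ : ℂ)) ^ 2)⁻¹ := by
      intro φ
      rw [integral_mul_cexp (by rw [hre]; positivity), mul_pow, mul_inv]
    simp only [this]
    rw [← integral_Ioc_eq_integral_Ioo, ← intervalIntegral.integral_of_le
      (by linarith [Real.pi_pos]), intervalIntegral.integral_const_mul,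
      integral_inv_sq_sub_I_mul_cos hk hs h]
    field_simp
  · have hdom : Integrable (fun p : ℝ × ℝ => (1 : ℝ) * (p.2 * Real.exp (-(τ * k * p.2))))
        ((volume.restrict (Set.Ioo (-Real.pi) Real.pi)).prod (volume.restrict (Set.Ioi 0))) :=
      Integrable.mul_prod (integrable_const 1)
        (integrableOn_mul_exp_neg_mul (mul_pos hτ hk))
    rw [IntegrableOn, ← Measure.prod_restrict]
    refine hdom.mono' (by fun_prop) ?_
    rw [Measure.prod_restrict]
    filter_upwards [ae_restrict_mem (measurableSet_Ioo.prod measurableSet_Ioi)] with p hp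
    rw [Prod.fst_swap, Prod.snd_swap, norm_mul_cexp _ (le_of_lt hp.2), hre, one_mul]

/-- The theorem in cylindrical coordinates, for the cone `k ‖z‖ ≤ t` and with `s² = k² + 1`. -/
lemma solid {k s τ : ℝ} (hk : 0 < k) (hs : 0 < s) (h : s ^ 2 = k ^ 2 + 1) (hτ : 0 < τ) :
    IntegrableOn (fun p : ℝ × ℂ => Complex.exp (τ * (-(p.1 : ℂ) + Complex.I * (p.2.re : ℂ))))
      {p : ℝ × ℂ | k * ‖p.2‖ ≤ p.1} ∧
    ∫ p in {p : ℝ × ℂ | k * ‖p.2‖ ≤ p.1},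
      Complex.exp (τ * (-(p.1 : ℂ) + Complex.I * (p.2.re : ℂ))) =
      2 * Real.pi * k / (τ ^ 3 * s ^ 3) := by
  set D : Set (ℝ × ℂ) := {p | k * ‖p.2‖ ≤ p.1} with hD
  have hDm : MeasurableSet D := measurableSet_le (by fun_prop) (by fun_prop)
  set g : ℝ × ℂ → ℂ := fun p => Complex.exp (τ * (-(p.1 : ℂ) + Complex.I * (p.2.re : ℂ))) with hg
  have hgm : Measurable g := by fun_prop
  have hsec : ∀ (z : ℂ), (fun t : ℝ => D.indicator g (t, z)) =
      (Set.Ici (k * ‖z‖)).indicator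
        (fun t : ℝ => Complex.exp (τ * Complex.I * (z.re : ℂ)) * Complex.exp ((-τ : ℂ) * t)) := by
    intro z
    funext t
    simp only [Set.indicator, hD, Set.mem_ofPred_eq, Set.mem_Ici, hg, ← Complex.exp_add]
    congr 2
    ring
  have hτre : ((-τ : ℂ)).re < 0 := by simpa using hτ
  have hne : ∀ z : ℂ, ‖Complex.exp (τ * Complex.I * (z.re : ℂ))‖ = 1 := by
    intro z
    rw [Complex.norm_exp]
    simp
  have hnorm : ∀ z : ℂ, ∫ t : ℝ, ‖D.indicator g (t, z)‖ =
      τ⁻¹ * Real.exp (-(τ * k * ‖z‖)) := by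
    intro z
    have : (fun t : ℝ => ‖D.indicator g (t, z)‖) =
        (Set.Ici (k * ‖z‖)).indicator (fun t : ℝ => Real.exp (-τ * t)) := by
      funext t
      rw [congrFun (hsec z) t, norm_indicator_eq_indicator_norm]
      congr 1
      funext t
      rw [norm_mul, hne, one_mul, Complex.norm_exp]
      simp
    rw [this, integral_indicator measurableSet_Ici, integral_Ici_eq_integral_Ioi,
      integral_exp_mul_Ioi (by linarith)]
    rw [neg_div_neg_eq, div_eq_inv_mul]
    congr 2
    ring
  have hint : Integrable (D.indicator g) ((volume : Measure ℝ).prod (volume : Measure ℂ)) := by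
    rw [integrable_prod_iff' (hgm.indicator hDm).aestronglyMeasurable]
    refine ⟨Filter.Eventually.of_forall fun z => ?_, ?_⟩
    · rw [hsec, integrable_indicator_iff measurableSet_Ici, integrableOn_Ici_iff_integrableOn_Ioi]
      exact (integrableOn_exp_mul_complex_Ioi hτre _).const_mul _
    · simp only [hnorm]
      exact (integrable_exp_neg_mul_norm (mul_pos hτ hk)).const_mul _
  refine ⟨(integrable_indicator_iff hDm).mp hint, ?_⟩
  rw [← integral_indicator hDm, Measure.volume_eq_prod, integral_prod_symm _ hint]
  have hτ0 : (τ : ℂ) ≠ 0 := by exact_mod_cast hτ.ne'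
  have : ∀ z : ℂ, ∫ t : ℝ, D.indicator g (t, z) =
      (τ : ℂ)⁻¹ * Complex.exp (-(τ * (k * ‖z‖ : ℝ)) + τ * Complex.I * (z.re : ℂ)) := by
    intro z
    rw [hsec, integral_indicator measurableSet_Ici, integral_Ici_eq_integral_Ioi,
      integral_const_mul, integral_exp_mul_complex_Ioi hτre, neg_div_neg_eq, Complex.exp_add,
      neg_mul]
    ring
  simp only [this]
  rw [integral_const_mul, integral_plane hk hs h hτ]
  field_simp

/-- Volume-preserving coordinates on `ℝ³`: the component along `e`, and the orthogonal
component viewed in `ℂ` with `dp` as the real axis. -/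
lemma exists_cylindrical (e dp : EuclideanSpace ℝ (Fin 3)) (he : ‖e‖ = 1) (hdp : ‖dp‖ = 1)
    (h : ⟪e, dp⟫ = 0) :
    ∃ f : EuclideanSpace ℝ (Fin 3) ≃ᵐ ℝ × ℂ, MeasurePreserving f ∧
      ∀ x, (f x).1 = ⟪e, x⟫ ∧ (f x).2.re = ⟪dp, x⟫ ∧ ‖x‖ ^ 2 = (f x).1 ^ 2 + ‖(f x).2‖ ^ 2 := by
  have hon : Orthonormal ℝ (({0, 1} : Set (Fin 3)).domRestrict ![e, dp, 0]) := by
    constructor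
    · rintro ⟨i, rfl | rfl⟩ <;> simp [he, hdp]
    · rintro ⟨i, rfl | rfl⟩ ⟨j, rfl | rfl⟩ hij <;>
        simp_all [real_inner_comm]
  obtain ⟨b, hb⟩ := hon.exists_orthonormalBasis_extension_of_card_eq (by simp)
  have hb0 : b 0 = e := by simpa using hb 0 (by simp)
  have hb1 : b 1 = dp := by simpa using hb 1 (by simp)
  refine ⟨((b.measurableEquiv.trans (MeasurableEquiv.toLp 2 (Fin 3 → ℝ)).symm).trans
    (MeasurableEquiv.piFinSuccAbove (fun _ => ℝ) 0)).trans
    (MeasurableEquiv.prodCongr (MeasurableEquiv.refl ℝ) Complex.measurableEquivPi.symm), ?_, ?_⟩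
  · have h1 := b.measurePreserving_measurableEquiv
    have h2 := EuclideanSpace.volume_preserving_symm_measurableEquiv_toLp (Fin 3)
    have h3 := volume_preserving_piFinSuccAbove (fun _ : Fin 3 => ℝ) 0
    have h4 : MeasurePreserving
        (Prod.map (id : ℝ → ℝ) Complex.measurableEquivPi.symm) :=
      (MeasurePreserving.id volume).prod Complex.volume_preserving_equiv_pi.symm
    exact h4.comp (h3.comp (h2.comp h1))
  · intro x
    have hx1 : b.repr x 0 = ⟪e, x⟫ := by rw [b.repr_apply_apply, hb0]
    have hx2 : b.repr x 1 = ⟪dp, x⟫ := by rw [b.repr_apply_apply, hb1]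
    refine ⟨hx1, ?_, ?_⟩
    · rw [← hx2]
      change (Complex.measurableEquivPi.symm _).re = _
      rw [Complex.measurableEquivPi_symm_apply]
      simp
      rfl
    · change _ = (b.repr x 0) ^ 2 + ‖Complex.measurableEquivPi.symm _‖ ^ 2
      rw [Complex.measurableEquivPi_symm_apply, ← b.repr.norm_map x, EuclideanSpace.norm_sq_eq,
        Fin.sum_univ_three, Complex.sq_norm, Complex.normSq_add_mul_I]
      simp only [Real.norm_eq_abs, sq_abs]
      exact add_assoc _ _ _

/-- The cone condition on a point at distance `n` from the apex, at height `t` along the axis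
and at distance `r` from it. -/
lemma cone_iff {θ t r n : ℝ} (hθ : θ ∈ Set.Ioo 0 (Real.pi / 2)) (hr : 0 ≤ r) (hn : 0 ≤ n)
    (h : n ^ 2 = t ^ 2 + r ^ 2) :
    Real.cos θ * n ≤ t ↔ Real.cos θ / Real.sin θ * r ≤ t := by
  have hc : 0 < Real.cos θ := Real.cos_pos_of_mem_Ioo ⟨by linarith [hθ.1, Real.pi_pos], hθ.2⟩
  have hs : 0 < Real.sin θ := Real.sin_pos_of_pos_of_lt_pi hθ.1 (by linarith [hθ.2, Real.pi_pos])
  have hsc := Real.sin_sq_add_cos_sq θ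
  have key : t ^ 2 - (Real.cos θ * n) ^ 2 = (Real.sin θ * t) ^ 2 - (Real.cos θ * r) ^ 2 := by
    rw [mul_pow, h]
    linear_combination (-t ^ 2) * hsc
  have hcn : 0 ≤ Real.cos θ * n := by positivity
  have hcr : 0 ≤ Real.cos θ * r := by positivity
  rw [div_mul_eq_mul_div, div_le_iff₀ hs, mul_comm t]
  constructor
  · intro ht
    have : 0 ≤ t := hcn.trans ht
    have := (sq_le_sq₀ hcn this).mpr ht
    exact (sq_le_sq₀ hcr (by positivity)).mp (by linarith)
  · intro ht
    have : 0 ≤ t := nonneg_of_mul_nonneg_right (hcr.trans ht) hs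
    have := (sq_le_sq₀ hcr (by positivity)).mpr ht
    exact (sq_le_sq₀ hcn ‹0 ≤ t›).mp (by linarith)

/-- For the infinite circular cone `C ⊂ ℝ³` with apex at the origin, axis `v₀`
and half-opening angle `θ₀ ∈ (0, π/2)`, `d = -v₀/‖v₀‖`, a unit vector `d⊥ ⊥ d` and `τ > 0`,
the CGO integral over `C` converges absolutely and equals `2π cos θ₀ sin² θ₀ / τ³`. -/
theorem cone_cgo_integral (v₀ : EuclideanSpace ℝ (Fin 3)) (hv₀ : v₀ ≠ 0)
    (θ₀ : ℝ) (hθ₀ : θ₀ ∈ Set.Ioo 0 (Real.pi / 2))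
    (C : Set (EuclideanSpace ℝ (Fin 3)))
    (hC : C = {x | ⟪x, v₀⟫ ≥ Real.cos θ₀ * (‖x‖ * ‖v₀‖)})
    (d dp : EuclideanSpace ℝ (Fin 3)) (hdv : d = -(‖v₀‖⁻¹ • v₀))
    (hdp : ‖dp‖ = 1) (horth : ⟪d, dp⟫ = 0) (τ : ℝ) (hτ : 0 < τ) :
    IntegrableOn
      (fun x => Complex.exp (τ * ((⟪d, x⟫ : ℂ) + Complex.I * (⟪dp, x⟫ : ℂ)))) C volume ∧
    ∫ x in C, Complex.exp (τ * ((⟪d, x⟫ : ℂ) + Complex.I * (⟪dp, x⟫ : ℂ))) =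
      ((2 * Real.pi * Real.cos θ₀ * Real.sin θ₀ ^ 2 / τ ^ 3 : ℝ) : ℂ) := by
  have hc : 0 < Real.cos θ₀ :=
    Real.cos_pos_of_mem_Ioo ⟨by linarith [hθ₀.1, Real.pi_pos], hθ₀.2⟩
  have hs : 0 < Real.sin θ₀ :=
    Real.sin_pos_of_pos_of_lt_pi hθ₀.1 (by linarith [hθ₀.2, Real.pi_pos])
  have hv : 0 < ‖v₀‖ := norm_pos_iff.mpr hv₀
  have hd : ‖-d‖ = 1 := by
    rw [hdv, neg_neg, norm_smul, norm_inv, norm_norm, inv_mul_cancel₀ hv.ne']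
  obtain ⟨f, hf, hfx⟩ := exists_cylindrical (-d) dp hd hdp (by rw [inner_neg_left, horth, neg_zero])
  have hpre : C = f ⁻¹' {p : ℝ × ℂ | Real.cos θ₀ / Real.sin θ₀ * ‖p.2‖ ≤ p.1} := by
    ext x
    obtain ⟨h1, -, h3⟩ := hfx x
    have hin : ⟪x, v₀⟫ = (f x).1 * ‖v₀‖ := by
      rw [h1, hdv, neg_neg, real_inner_smul_left, real_inner_comm]
      field_simp
    rw [hC, Set.mem_preimage, Set.mem_ofPred_eq, Set.mem_ofPred_eq,
      ← cone_iff hθ₀ (norm_nonneg _) (norm_nonneg x) h3, hin, ge_iff_le, ← mul_assoc,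
      mul_le_mul_iff_of_pos_right hv]
  have hfun : (fun x => Complex.exp (τ * ((⟪d, x⟫ : ℂ) + Complex.I * (⟪dp, x⟫ : ℂ)))) =
      (fun p : ℝ × ℂ => Complex.exp (τ * (-(p.1 : ℂ) + Complex.I * (p.2.re : ℂ)))) ∘ f := by
    funext x
    obtain ⟨h1, h2, -⟩ := hfx x
    simp only [Function.comp_apply, h1, h2, inner_neg_left, Complex.ofReal_neg, neg_neg]
  have hks : (Real.sin θ₀)⁻¹ ^ 2 = (Real.cos θ₀ / Real.sin θ₀) ^ 2 + 1 := by
    field_simp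
    linarith [Real.sin_sq_add_cos_sq θ₀]
  obtain ⟨hI, hval⟩ := solid (div_pos hc hs) (inv_pos.mpr hs) hks hτ
  constructor
  · rw [hfun, hpre]
    exact (hf.integrableOn_comp_preimage f.measurableEmbedding).mpr hI
  · rw [hfun, hpre]
    refine ((hf.setIntegral_preimage_emb f.measurableEmbedding _ _).trans hval).trans ?_
    have hs0 : (Real.sin θ₀ : ℂ) ≠ 0 := by exact_mod_cast hs.ne'
    have hτ0 : (τ : ℂ) ≠ 0 := by exact_mod_cast hτ.ne'
    rw [Complex.ofReal_div, Complex.ofReal_inv]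
    simp only [Complex.ofReal_div, Complex.ofReal_mul, Complex.ofReal_pow, Complex.ofReal_ofNat]
    field_simp
end

section
/- Let n ≥ 1, let A ⊆ ℝⁿ be a Lebesgue-measurable set, let d ∈ ℝⁿ be a unit vector and ζ > 0 be such that ⟪d, x⟫ ≤ −ζ ‖x‖ for every x ∈ A. Then for every real α ≥ 0 and every τ > 0, ∫_A ‖x‖^α e^{τ ⟪d, x⟫} dx ≤ (ζ τ)^{−(α+n)} · ∫_{ℝⁿ} ‖x‖^α e^{−‖x‖} dx, and the right-hand side is finite. -/
/-!
On `A` the cone condition gives `e^{τ⟪d,x⟫} ≤ e^{-c‖x‖}` with `c = ζτ`, so the integral over `A` is at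
most the integral of `‖x‖^α e^{-c‖x‖}` over the whole space. The dilation `x ↦ c • x` turns the latter
into `c^{-α} c^{-n} ∫ ‖x‖^α e^{-‖x‖}`. Finiteness of this last integral follows by integration in
polar coordinates, which reduces it to the convergence of the Gamma integral at `α + n`.
-/

open MeasureTheory
open scoped RealInnerProductSpace ENNReal

theorem lintegral_norm_rpow_mul_exp_neg_lt_top (n : ℕ) (hn : 1 ≤ n) (α : ℝ) (hα : 0 ≤ α) :
    (∫⁻ x : EuclideanSpace ℝ (Fin n),
        ENNReal.ofReal (‖x‖ ^ α * Real.exp (-‖x‖))) < ∞ := by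
  -- Polar coordinates are available only in a nontrivial space.
  have : Nonempty (Fin n) := ⟨⟨0, hn⟩⟩
  have hint : Integrable (fun x : EuclideanSpace ℝ (Fin n) => ‖x‖ ^ α * Real.exp (-‖x‖)) := by
    refine (integrable_fun_norm_addHaar (volume : Measure (EuclideanSpace ℝ (Fin n)))
      (f := fun r : ℝ => r ^ α * Real.exp (-r))).2 ?_
    have hpos : 0 < α + n := by positivity
    refine (Real.GammaIntegral_convergent hpos).congr_fun (fun r hr => ?_) measurableSet_Ioi
    have hr : 0 < r := hr
    simp only [finrank_euclideanSpace, Fintype.card_fin, smul_eq_mul]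
    rw [← Real.rpow_natCast, ← mul_assoc, ← Real.rpow_add hr, Nat.cast_sub hn, mul_comm]
    congr 2
    push_cast
    ring
  exact hint.lintegral_lt_top

theorem lintegral_norm_rpow_mul_exp_neg_mul (n : ℕ) (α c : ℝ) (hc : 0 < c) :
    (∫⁻ x : EuclideanSpace ℝ (Fin n), ENNReal.ofReal (‖x‖ ^ α * Real.exp (-(c * ‖x‖)))) =
      ENNReal.ofReal (c ^ (-(α + n))) *
        ∫⁻ x : EuclideanSpace ℝ (Fin n), ENNReal.ofReal (‖x‖ ^ α * Real.exp (-‖x‖)) := by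
  set g : EuclideanSpace ℝ (Fin n) → ℝ≥0∞ :=
    fun x => ENNReal.ofReal (‖x‖ ^ α * Real.exp (-‖x‖)) with hg_def
  have hg : Measurable g := by
    rw [hg_def]
    fun_prop
  have hpt : ∀ x : EuclideanSpace ℝ (Fin n),
      ENNReal.ofReal (‖x‖ ^ α * Real.exp (-(c * ‖x‖))) =
        ENNReal.ofReal (c ^ (-α)) * g (c • x) := by
    intro x
    have hcα : c ^ (-α) * c ^ α = 1 := by
      rw [← Real.rpow_add hc, neg_add_cancel, Real.rpow_zero]
    rw [hg_def, ← ENNReal.ofReal_mul (by positivity)]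
    simp only [norm_smul, Real.norm_eq_abs, abs_of_pos hc]
    rw [Real.mul_rpow hc.le (norm_nonneg x), ← mul_assoc, ← mul_assoc, hcα, one_mul]
  have hscale : ∫⁻ x, g (c • x) = ENNReal.ofReal (c ^ (-(n : ℝ))) * ∫⁻ x, g x := by
    rw [← lintegral_map hg (measurable_const_smul c),
      Measure.map_addHaar_smul _ hc.ne', lintegral_smul_measure, smul_eq_mul,
      finrank_euclideanSpace, Fintype.card_fin, abs_of_pos (by positivity),
      Real.rpow_neg hc.le, Real.rpow_natCast]
  simp_rw [hpt]
  rw [lintegral_const_mul' _ _ ENNReal.ofReal_ne_top, hscale, ← mul_assoc,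
    ← ENNReal.ofReal_mul (by positivity), ← Real.rpow_add hc, neg_add]

/-- If `⟪d,x⟫ ≤ -ζ‖x‖` on a measurable set `A ⊆ ℝⁿ`, then for `α ≥ 0`, `τ > 0`:
`∫_A ‖x‖^α e^{τ⟪d,x⟫} dx ≤ (ζτ)^{-(α+n)} ∫_{ℝⁿ} ‖x‖^α e^{-‖x‖} dx`, the right-hand side
integral being finite. -/
theorem weighted_decay_integral_bound (n : ℕ) (hn : 1 ≤ n)
    (A : Set (EuclideanSpace ℝ (Fin n))) (hA : MeasurableSet A)
    (d : EuclideanSpace ℝ (Fin n)) (hd : ‖d‖ = 1)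
    (ζ : ℝ) (hζ : 0 < ζ) (hcone : ∀ x ∈ A, ⟪d, x⟫ ≤ -ζ * ‖x‖)
    (α : ℝ) (hα : 0 ≤ α) (τ : ℝ) (hτ : 0 < τ) :
    (∫⁻ x : EuclideanSpace ℝ (Fin n),
        ENNReal.ofReal (‖x‖ ^ α * Real.exp (-‖x‖))) < ∞ ∧
    (∫⁻ x in A, ENNReal.ofReal (‖x‖ ^ α * Real.exp (τ * ⟪d, x⟫))) ≤
      ENNReal.ofReal ((ζ * τ) ^ (-(α + n))) *
        ∫⁻ x : EuclideanSpace ℝ (Fin n), ENNReal.ofReal (‖x‖ ^ α * Real.exp (-‖x‖)) := by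
  refine ⟨lintegral_norm_rpow_mul_exp_neg_lt_top n hn α hα, ?_⟩
  rw [← lintegral_norm_rpow_mul_exp_neg_mul n α (ζ * τ) (mul_pos hζ hτ)]
  refine (setLIntegral_mono' hA fun x hx => ?_).trans (setLIntegral_le_lintegral A _)
  have hexp : τ * ⟪d, x⟫ ≤ -(ζ * τ * ‖x‖) :=
    (mul_le_mul_of_nonneg_left (hcone x hx) hτ.le).trans_eq (by ring)
  gcongr
end

section
/- Let θ_m < θ_M be real with θ_M − θ_m ∈ (0, π), let d, d⊥ ∈ ℝ² be unit vectors with ⟪d, d⊥⟫ = 0, let ζ ∈ (0,1] satisfy ⟪d, (cos θ, sin θ)⟫ ≤ −ζ for every θ ∈ [θ_m, θ_M], let h > 0, τ > 0, and let u₀(x) = exp(τ(⟪d, x⟫ + i ⟪d⊥, x⟫)). Then ∫_{θ_m}^{θ_M} ( ‖u₀(h cos θ, h sin θ)‖² + ∑_{j=1}^{2} ‖∂u₀/∂x_j (h cos θ, h sin θ)‖² ) dθ ≤ (θ_M − θ_m)(1 + 2τ²) e^{−2 ζ h τ}. -/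
open scoped RealInnerProductSpace

/-! The modulus of `exp (τ (⟪d, x⟫ + i ⟪d⊥, x⟫))` is `exp (τ ⟪d, x⟫)`, and its derivative in a
direction `v` is the function itself times `τ (⟪d, v⟫ + i ⟪d⊥, v⟫)`. Summing the squared moduli over
the coordinate directions gives the factor `τ² (‖d‖² + ‖d⊥‖²) = 2τ²`, so the integrand at `x = h e(θ)`
is exactly `(1 + 2τ²) exp (2τh ⟪d, e(θ)⟫)`. The cone condition bounds this pointwise by the constant
`(1 + 2τ²) exp (-2ζhτ)`. -/

theorem cgo_norm_sq (d dp : EuclideanSpace ℝ (Fin 2)) (τ : ℝ) (x : EuclideanSpace ℝ (Fin 2)) :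
    ‖Complex.exp (τ * ((⟪d, x⟫ : ℂ) + Complex.I * (⟪dp, x⟫ : ℂ)))‖ ^ 2 =
      Real.exp (2 * τ * ⟪d, x⟫) := by
  rw [Complex.norm_exp, ← Real.exp_nat_mul]
  congr 1
  simp
  ring

theorem cgo_fderiv (d dp : EuclideanSpace ℝ (Fin 2)) (τ : ℝ) (x v : EuclideanSpace ℝ (Fin 2)) :
    fderiv ℝ (fun x : EuclideanSpace ℝ (Fin 2) =>
        Complex.exp (τ * ((⟪d, x⟫ : ℂ) + Complex.I * (⟪dp, x⟫ : ℂ)))) x v =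
      Complex.exp (τ * ((⟪d, x⟫ : ℂ) + Complex.I * (⟪dp, x⟫ : ℂ))) *
        (τ * ((⟪d, v⟫ : ℂ) + Complex.I * (⟪dp, v⟫ : ℂ))) := by
  have hlin (w : EuclideanSpace ℝ (Fin 2)) :
      HasFDerivAt (fun x => (⟪w, x⟫ : ℂ)) (Complex.ofRealCLM.comp (innerSL ℝ w)) x :=
    (Complex.ofRealCLM.comp (innerSL ℝ w)).hasFDerivAt
  have hD := (((hlin d).add ((hlin dp).const_mul Complex.I)).const_mul (τ : ℂ)).cexp
  refine (congrArg (fun L => L v) hD.fderiv).trans ?_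
  simp [mul_add]

theorem cgo_partial_sum (d dp : EuclideanSpace ℝ (Fin 2)) (hd : ‖d‖ = 1) (hdp : ‖dp‖ = 1)
    (τ : ℝ) (x : EuclideanSpace ℝ (Fin 2)) :
    ∑ j : Fin 2, ‖fderiv ℝ (fun x : EuclideanSpace ℝ (Fin 2) =>
        Complex.exp (τ * ((⟪d, x⟫ : ℂ) + Complex.I * (⟪dp, x⟫ : ℂ)))) x
          (EuclideanSpace.single j 1)‖ ^ 2 =
      2 * τ ^ 2 * Real.exp (2 * τ * ⟪d, x⟫) := by
  have hnorm (a b : ℝ) : ‖(τ : ℂ) * ((a : ℂ) + Complex.I * (b : ℂ))‖ ^ 2 =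
      τ ^ 2 * (a ^ 2 + b ^ 2) := by
    rw [← Complex.normSq_eq_norm_sq, Complex.normSq_apply]
    simp
    ring
  have hd2 : d 0 ^ 2 + d 1 ^ 2 = 1 := by
    have := EuclideanSpace.real_norm_sq_eq d
    rw [hd, Fin.sum_univ_two] at this
    linarith
  have hdp2 : dp 0 ^ 2 + dp 1 ^ 2 = 1 := by
    have := EuclideanSpace.real_norm_sq_eq dp
    rw [hdp, Fin.sum_univ_two] at this
    linarith
  simp only [cgo_fderiv, norm_mul _ ((τ : ℂ) * _), mul_pow _ ‖(τ : ℂ) * _‖, hnorm, cgo_norm_sq,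
    EuclideanSpace.inner_single_right, Fin.sum_univ_two, conj_trivial, one_mul]
  linear_combination τ ^ 2 * Real.exp (2 * τ * ⟪d, x⟫) * (hd2 + hdp2)

/-- Exponential smallness of the CGO function and its gradient on the
circular arc of radius `h` inside the sector of angles `[θ_m, θ_M]`:
`∫_{θ_m}^{θ_M} (‖u₀‖² + ∑_j ‖∂u₀/∂x_j‖²)(h cos θ, h sin θ) dθ
  ≤ (θ_M - θ_m)(1 + 2τ²) e^{-2ζhτ}`. -/
theorem cgo_arc_estimate (θm θM : ℝ) (h1 : θm < θM) (h2 : θM - θm < Real.pi)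
    (d dp : EuclideanSpace ℝ (Fin 2)) (hd : ‖d‖ = 1) (hdp : ‖dp‖ = 1)
    (horth : ⟪d, dp⟫ = 0)
    (e : ℝ → EuclideanSpace ℝ (Fin 2))
    (he : ∀ θ : ℝ, e θ 0 = Real.cos θ ∧ e θ 1 = Real.sin θ)
    (ζ : ℝ) (hζ : ζ ∈ Set.Ioc (0 : ℝ) 1)
    (hcone : ∀ θ ∈ Set.Icc θm θM, ⟪d, e θ⟫ ≤ -ζ)
    (h τ : ℝ) (hh : 0 < h) (hτ : 0 < τ)
    (u₀ : EuclideanSpace ℝ (Fin 2) → ℂ)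
    (hu₀ : u₀ = fun x => Complex.exp (τ * ((⟪d, x⟫ : ℂ) + Complex.I * (⟪dp, x⟫ : ℂ)))) :
    ∫ θ in θm..θM,
        (‖u₀ (h • e θ)‖ ^ 2 +
          ∑ j : Fin 2, ‖fderiv ℝ u₀ (h • e θ) (EuclideanSpace.single j 1)‖ ^ 2) ≤
      (θM - θm) * (1 + 2 * τ ^ 2) * Real.exp (-(2 * ζ * h * τ)) := by
  have hpt : ∀ θ ∈ Set.uIoc θm θM, ‖‖u₀ (h • e θ)‖ ^ 2 +
      ∑ j : Fin 2, ‖fderiv ℝ u₀ (h • e θ) (EuclideanSpace.single j 1)‖ ^ 2‖ ≤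
      (1 + 2 * τ ^ 2) * Real.exp (-(2 * ζ * h * τ)) := by
    intro θ hθ
    rw [Set.uIoc_of_le h1.le] at hθ
    have hc := hcone θ (Set.Ioc_subset_Icc_self hθ)
    rw [Real.norm_of_nonneg (by positivity), hu₀, cgo_partial_sum d dp hd hdp, cgo_norm_sq,
      ← one_add_mul, real_inner_smul_right]
    gcongr
    have := mul_le_mul_of_nonneg_left hc (by positivity : 0 ≤ 2 * τ * h)
    linarith
  -- The constant bound needs no integrability, and the integral is at most its absolute value.
  have hint := intervalIntegral.norm_integral_le_of_norm_le_const hpt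
  rw [abs_of_pos (sub_pos.2 h1)] at hint
  exact (Real.le_norm_self _).trans (hint.trans_eq (by ring))
end

section
/- Let θ_m < θ_M be real with θ_M − θ_m ∈ (0, π), h > 0, and let C_h = {(r cos θ, r sin θ) : 0 < r < h, θ ∈ [θ_m, θ_M]} ⊂ ℝ² be the truncated sector with apex at the origin, with edge set Γ = {(r cos θ_m, r sin θ_m) : 0 ≤ r ≤ h} ∪ {(r cos θ_M, r sin θ_M) : 0 ≤ r ≤ h}. Let γ ∈ (0, 1), λ ∈ ℂ, let g : ℝ² → ℂ be γ-Hölder continuous on the closure of C_h, and let u, v : ℝ² → ℂ be twice continuously differentiable on an open set containing the closure of C_h. Assume: (i) Δu(x) + g(x) = 0 for all x ∈ C_h; (ii) Δv(x) + λ v(x) = 0 for all x ∈ C_h; (iii) u(x) = v(x) and Du(x) = Dv(x) (equality of total derivatives) for all x ∈ Γ. Then λ u(0) = g(0). -/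
/-!
The edges `Γ` contain two segments issuing from the apex in linearly independent directions
(because `0 < θM - θm < π`). The map `Du - Dv` vanishes along both, so its derivative at `0`,
which exists since `u` and `v` are `C²` near `0`, kills both directions and hence is zero
(`clm_eq_zero_of_polar`): `D²u(0) = D²v(0)`. Letting `x → 0` along an edge in the two equations
(`equation_at_apex`) gives `Δu(0) = -g(0)` and `Δv(0) = -λ v(0)`. As the Laplacians agree at `0`
and `u(0) = v(0)`, the claim follows. The Hölder condition enters through the continuity of `g`
at the apex.
-/

open scoped RealInnerProductSpace

open Filter Topology

/-- The unit vector of polar angle `θ`. -/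
noncomputable def polarVec (θ : ℝ) : EuclideanSpace ℝ (Fin 2) := !₂[Real.cos θ, Real.sin θ]

/-- Two unit vectors whose angles differ by an amount in `(0, π)` span the plane: their
determinant is `sin (θM - θm) > 0`. -/
lemma clm_eq_zero_of_polar {F : Type*} [NormedAddCommGroup F] [NormedSpace ℝ F]
    {θm θM : ℝ} (h1 : θm < θM) (h2 : θM - θm < Real.pi)
    (A : EuclideanSpace ℝ (Fin 2) →L[ℝ] F) (hm : A (polarVec θm) = 0)
    (hM : A (polarVec θM) = 0) : A = 0 := by
  have hD : 0 < Real.sin (θM - θm) := Real.sin_pos_of_pos_of_lt_pi (by linarith) h2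
  have hsin := Real.sin_sub θM θm
  ext x
  -- Cramer's rule for the coordinates of `x` in the basis of the two edge directions
  have key : Real.sin (θM - θm) • x =
      (Real.sin θM * x 0 - Real.cos θM * x 1) • polarVec θm
      + (Real.cos θm * x 1 - Real.sin θm * x 0) • polarVec θM := by
    ext i
    fin_cases i <;> simp [polarVec, hsin] <;> ring
  have h0 : Real.sin (θM - θm) • A x = 0 := by
    rw [← map_smul, key, map_add, map_smul, map_smul, hm, hM]
    simp
  simpa using (smul_eq_zero.mp h0).resolve_left hD.ne'

lemma tendsto_smul_apex (e : EuclideanSpace ℝ (Fin 2)) :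
    Tendsto (fun t : ℝ => t • e) (𝓝[>] 0) (𝓝 0) := by
  have : Continuous fun t : ℝ => t • e := by fun_prop
  simpa using (this.tendsto 0).mono_left nhdsWithin_le_nhds

lemma differentiableAt_fderiv_of_contDiffAt {u : EuclideanSpace ℝ (Fin 2) → ℂ}
    {x : EuclideanSpace ℝ (Fin 2)} (hu : ContDiffAt ℝ 2 u x) :
    DifferentiableAt ℝ (fderiv ℝ u) x :=
  (hu.fderiv_right (m := 1) (by norm_num)).differentiableAt (by norm_num)

/-- A second-order equation valid along a ray near the apex passes to the limit at the apex, by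
continuity of the second derivative. -/
lemma equation_at_apex {u k : EuclideanSpace ℝ (Fin 2) → ℂ} (e : EuclideanSpace ℝ (Fin 2))
    (hu : ContDiffAt ℝ 2 u 0)
    (hk : Tendsto (fun t : ℝ => k (t • e)) (𝓝[>] 0) (𝓝 (k 0)))
    (heq : ∀ᶠ t : ℝ in 𝓝[>] 0,
      (∑ j : Fin 2, fderiv ℝ (fun y => fderiv ℝ u y (EuclideanSpace.single j 1)) (t • e)
        (EuclideanSpace.single j 1)) + k (t • e) = 0) :
    (∑ j : Fin 2, fderiv ℝ (fderiv ℝ u) 0 (EuclideanSpace.single j 1)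
        (EuclideanSpace.single j 1)) + k 0 = 0 := by
  have hcont : ContinuousAt (fderiv ℝ (fderiv ℝ u)) 0 :=
    ((hu.fderiv_right (m := 1) (by norm_num)).fderiv_right (m := 0) (by norm_num)).continuousAt
  have hlim : Tendsto (fun t : ℝ => (∑ j : Fin 2, fderiv ℝ (fderiv ℝ u) (t • e)
      (EuclideanSpace.single j 1) (EuclideanSpace.single j 1)) + k (t • e)) (𝓝[>] 0)
      (𝓝 ((∑ j : Fin 2, fderiv ℝ (fderiv ℝ u) 0 (EuclideanSpace.single j 1)
        (EuclideanSpace.single j 1)) + k 0)) := by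
    refine Tendsto.add (tendsto_finsetSum _ fun j _ => ?_) hk
    have hc := (hcont.clm_apply (continuousAt_const (y := EuclideanSpace.single j (1 : ℝ)))).clm_apply
      (continuousAt_const (y := EuclideanSpace.single j (1 : ℝ)))
    exact hc.tendsto.comp (tendsto_smul_apex e)
  have hev : ∀ᶠ t : ℝ in 𝓝[>] 0, ContDiffAt ℝ 2 u (t • e) :=
    (tendsto_smul_apex e).eventually (hu.eventually (by simp))
  refine tendsto_nhds_unique hlim (tendsto_const_nhds.congr' ?_)
  filter_upwards [heq, hev] with t ht hct
  rw [← ht]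
  congr 1
  refine Finset.sum_congr rfl fun j _ => ?_
  rw [fderiv_clm_apply (differentiableAt_fderiv_of_contDiffAt hct) (differentiableAt_const _)]
  simp

/-- If the gradients of `u` and `v` agree on a segment issuing from the apex, then the second
derivatives at the apex agree in the direction of the segment. -/
lemma second_fderiv_eq_of_ray {u v : EuclideanSpace ℝ (Fin 2) → ℂ}
    (hu : ContDiffAt ℝ 2 u 0) (hv : ContDiffAt ℝ 2 v 0) {h : ℝ} (hh : 0 < h)
    (e : EuclideanSpace ℝ (Fin 2))
    (heq : ∀ t : ℝ, 0 ≤ t → t ≤ h → fderiv ℝ u (t • e) = fderiv ℝ v (t • e)) :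
    (fderiv ℝ (fderiv ℝ u) 0 - fderiv ℝ (fderiv ℝ v) 0) e = 0 := by
  have hray : HasDerivAt (fun t : ℝ => t • e) e 0 := by
    simpa using (hasDerivAt_id (0 : ℝ)).smul_const e
  have hcomp : ∀ w : EuclideanSpace ℝ (Fin 2) → ℂ, ContDiffAt ℝ 2 w 0 →
      HasDerivAt (fun t : ℝ => fderiv ℝ w (t • e)) (fderiv ℝ (fderiv ℝ w) 0 e) 0 := by
    intro w hw
    have hd : HasFDerivAt (fderiv ℝ w) (fderiv ℝ (fderiv ℝ w) 0) ((0 : ℝ) • e) := by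
      rw [zero_smul]
      exact (differentiableAt_fderiv_of_contDiffAt hw).hasFDerivAt
    exact hd.comp_hasDerivAt (0 : ℝ) hray
  have hmem : (0 : ℝ) ∈ Set.Icc 0 h := ⟨le_rfl, hh.le⟩
  have huniq := (uniqueDiffOn_Icc hh) 0 hmem
  have hU := (hcomp u hu).hasDerivWithinAt (s := Set.Icc 0 h)
  have hV := ((hcomp v hv).hasDerivWithinAt (s := Set.Icc 0 h)).congr
    (fun t ht => heq t ht.1 ht.2) (heq 0 hmem.1 hmem.2)
  rw [_root_.sub_apply, sub_eq_zero]
  exact huniq.eq_deriv _ hU hV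

/-- Corner vanishing theorem (classical-regularity form of Theorem 2.2).
If `Δu + g = 0` and `Δv + λv = 0` in the truncated sector `C_h ⊂ ℝ²` with apex at the
origin and opening angle in `(0,π)`, `g` is `γ`-Hölder on `closure C_h`, `u, v` are `C²`
on an open neighbourhood of `closure C_h`, and `u = v`, `Du = Dv` on the two edges `Γ`,
then `λ u(0) = g(0)`. -/
theorem corner_vanishing (θm θM : ℝ) (h1 : θm < θM) (h2 : θM - θm < Real.pi)
    (h : ℝ) (hh : 0 < h)
    (Ch Γ : Set (EuclideanSpace ℝ (Fin 2)))
    (hCh : Ch = {x | ∃ r θ, 0 < r ∧ r < h ∧ θ ∈ Set.Icc θm θM ∧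
      x 0 = r * Real.cos θ ∧ x 1 = r * Real.sin θ})
    (hΓ : Γ = {x | ∃ r : ℝ, 0 ≤ r ∧ r ≤ h ∧
      ((x 0 = r * Real.cos θm ∧ x 1 = r * Real.sin θm) ∨
       (x 0 = r * Real.cos θM ∧ x 1 = r * Real.sin θM))})
    (γ : ℝ) (hγ : γ ∈ Set.Ioo (0 : ℝ) 1) (lam : ℂ)
    (g u v : EuclideanSpace ℝ (Fin 2) → ℂ)
    (hHolder : ∃ L : ℝ, 0 ≤ L ∧ ∀ x ∈ closure Ch, ∀ y ∈ closure Ch,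
      ‖g x - g y‖ ≤ L * ‖x - y‖ ^ γ)
    (U : Set (EuclideanSpace ℝ (Fin 2))) (hU : IsOpen U) (hUsub : closure Ch ⊆ U)
    (hu : ContDiffOn ℝ 2 u U) (hv : ContDiffOn ℝ 2 v U)
    (hueq : ∀ x ∈ Ch,
      (∑ j : Fin 2, fderiv ℝ (fun y => fderiv ℝ u y (EuclideanSpace.single j 1)) x
        (EuclideanSpace.single j 1)) + g x = 0)
    (hveq : ∀ x ∈ Ch,
      (∑ j : Fin 2, fderiv ℝ (fun y => fderiv ℝ v y (EuclideanSpace.single j 1)) x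
        (EuclideanSpace.single j 1)) + lam * v x = 0)
    (hcauchy : ∀ x ∈ Γ, u x = v x ∧ fderiv ℝ u x = fderiv ℝ v x) :
    lam * u 0 = g 0 := by
  obtain ⟨L, hL, hHol⟩ := hHolder
  have hray_mem : ∀ t : ℝ, 0 < t → t < h → t • polarVec θm ∈ Ch := by
    intro t ht0 hth
    rw [hCh]
    exact ⟨t, θm, ht0, hth, ⟨le_rfl, h1.le⟩, by simp [polarVec], by simp [polarVec]⟩
  have hev : ∀ᶠ t : ℝ in 𝓝[>] 0, t • polarVec θm ∈ Ch := by
    filter_upwards [Ioo_mem_nhdsGT hh] with t ht using hray_mem t ht.1 ht.2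
  have h0 : (0 : EuclideanSpace ℝ (Fin 2)) ∈ closure Ch :=
    mem_closure_of_tendsto (tendsto_smul_apex _) hev
  have hU0 : U ∈ 𝓝 (0 : EuclideanSpace ℝ (Fin 2)) := hU.mem_nhds (hUsub h0)
  have hu0 := hu.contDiffAt hU0
  have hv0 := hv.contDiffAt hU0
  have hg : Tendsto (fun t : ℝ => g (t • polarVec θm)) (𝓝[>] 0) (𝓝 (g 0)) := by
    rw [tendsto_iff_norm_sub_tendsto_zero]
    have hb : Tendsto (fun t : ℝ => L * ‖t • polarVec θm - 0‖ ^ γ) (𝓝[>] 0) (𝓝 0) := by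
      have hn := ((tendsto_smul_apex (polarVec θm)).sub_const 0).norm
      simpa [Real.zero_rpow hγ.1.ne'] using
        (hn.rpow_const (Or.inr hγ.1.le)).const_mul L
    refine squeeze_zero' (Eventually.of_forall fun _ => norm_nonneg _) ?_ hb
    filter_upwards [hev] with t ht using hHol _ (subset_closure ht) _ h0
  have hlv : Tendsto (fun t : ℝ => lam * v (t • polarVec θm)) (𝓝[>] 0) (𝓝 (lam * v 0)) :=
    (hv0.continuousAt.tendsto.comp (tendsto_smul_apex _)).const_mul lam
  have hueq0 := equation_at_apex (k := g) (polarVec θm) hu0 hg (hev.mono fun t ht => hueq _ ht)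
  have hveq0 := equation_at_apex (k := fun x => lam * v x) (polarVec θm) hv0 hlv
    (hev.mono fun t ht => hveq _ ht)
  have hzero := clm_eq_zero_of_polar h1 h2
    (fderiv ℝ (fderiv ℝ u) 0 - fderiv ℝ (fderiv ℝ v) 0)
    (second_fderiv_eq_of_ray hu0 hv0 hh _ fun t ht0 hth => (hcauchy _ (by
      rw [hΓ]
      exact ⟨t, ht0, hth, Or.inl ⟨by simp [polarVec], by simp [polarVec]⟩⟩)).2)
    (second_fderiv_eq_of_ray hu0 hv0 hh _ fun t ht0 hth => (hcauchy _ (by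
      rw [hΓ]
      exact ⟨t, ht0, hth, Or.inr ⟨by simp [polarVec], by simp [polarVec]⟩⟩)).2)
  have huv : u 0 = v 0 := (hcauchy 0 (by
    rw [hΓ]
    exact ⟨0, le_rfl, hh.le, Or.inl ⟨by simp, by simp⟩⟩)).1
  rw [sub_eq_zero.mp hzero] at hueq0
  rw [huv]
  linear_combination hveq0 - hueq0
end

section
/- Let θ_m < θ_M be real with θ_M − θ_m ∈ (0, π), h > 0, and let C_h = {(r cos θ, r sin θ) : 0 < r < h, θ ∈ [θ_m, θ_M]} ⊂ ℝ² be the truncated sector with apex at the origin, with edge set Γ = {(r cos θ_m, r sin θ_m) : 0 ≤ r ≤ h} ∪ {(r cos θ_M, r sin θ_M) : 0 ≤ r ≤ h}. Let γ ∈ (0, 1), let g₁, g₂ : ℝ² → ℂ be γ-Hölder continuous on the closure of C_h, and let u, v : ℝ² → ℂ be twice continuously differentiable on an open set containing the closure of C_h. Assume: (i) Δu(x) + g₁(x) = 0 for all x ∈ C_h; (ii) Δv(x) + g₂(x) = 0 for all x ∈ C_h; (iii) u(x) = v(x) and Du(x) = Dv(x) for all x ∈ Γ. Then g₁(0) = g₂(0).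 -/
/-!
The Cauchy data give `Du = Dv` along both edges, so differentiating along each edge at the apex
shows that the second derivatives `D²u(0)` and `D²v(0)` agree when one argument is an edge
direction (`secondDeriv_eq_of_eq_on_ray`). As the opening angle lies in `(0, π)`, the two edge
directions span the plane, hence `D²u(0) = D²v(0)` and in particular `Δu(0) = Δv(0)`. By continuity
of the second derivatives and of `g₁, g₂` (`limit_source`), the two equations pass to the limit at
the apex, so that `g₁(0) = -Δu(0) = -Δv(0) = g₂(0)`.
-/

open Filter Topology

/-- If two differentiable maps agree on an initial segment of a ray from the origin, then their
one-sided derivatives along that ray agree at the origin. It is applied to `Du` and `Dv`. -/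
lemma secondDeriv_eq_of_eq_on_ray {E F : Type*} [NormedAddCommGroup E] [NormedSpace ℝ E]
    [NormedAddCommGroup F] [NormedSpace ℝ F] {f g : E → F} (hf : DifferentiableAt ℝ f 0)
    (hg : DifferentiableAt ℝ g 0) {h : ℝ} (hh : 0 < h) (e : E)
    (hfg : ∀ t : ℝ, 0 ≤ t → t ≤ h → f (t • e) = g (t • e)) :
    fderiv ℝ f 0 e = fderiv ℝ g 0 e := by
  have hp : HasDerivAt (fun t : ℝ => t • e) e 0 := by
    simpa using (hasDerivAt_id (0 : ℝ)).smul_const e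
  have key : ∀ k : E → F, DifferentiableAt ℝ k 0 →
      HasDerivWithinAt (fun t : ℝ => k (t • e)) (fderiv ℝ k 0 e) (Set.Icc 0 h) 0 := by
    intro k hk
    have hk' : HasFDerivAt k (fderiv ℝ k 0) ((0 : ℝ) • e) := by
      simpa using hk.hasFDerivAt
    exact (hk'.comp_hasDerivAt (0 : ℝ) hp).hasDerivWithinAt
  have h0 : (0 : ℝ) ∈ Set.Icc 0 h := ⟨le_rfl, hh.le⟩
  refine (uniqueDiffOn_Icc hh 0 h0).eq_deriv _ (key f hf) ?_
  exact (key g hg).congr (fun t ht => hfg t ht.1 ht.2) (hfg 0 le_rfl hh.le)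

/-- The equation `Δw + g = 0` on `S` extends to the origin when `0 ∈ closure S`, by continuity of
`D²w` and of `g`. The Laplacian at the origin is written through the iterated derivative
`fderiv ℝ (fderiv ℝ w)`, which is meaningful because `fderiv ℝ w` is differentiable there. -/
lemma limit_source (S U : Set (EuclideanSpace ℝ (Fin 2))) (hU : IsOpen U) (hS : closure S ⊆ U)
    (h0 : 0 ∈ closure S) (γ : ℝ) (hγ : 0 < γ) (g w : EuclideanSpace ℝ (Fin 2) → ℂ)
    (hg : ∃ L : ℝ, 0 ≤ L ∧ ∀ x ∈ closure S, ∀ y ∈ closure S, ‖g x - g y‖ ≤ L * ‖x - y‖ ^ γ)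
    (hw : ContDiffOn ℝ 2 w U)
    (heq : ∀ x ∈ S,
      (∑ j : Fin 2, fderiv ℝ (fun y => fderiv ℝ w y (EuclideanSpace.single j 1)) x
        (EuclideanSpace.single j 1)) + g x = 0) :
    DifferentiableAt ℝ (fderiv ℝ w) 0 ∧
    (∑ j : Fin 2, fderiv ℝ (fderiv ℝ w) 0 (EuclideanSpace.single j 1)
        (EuclideanSpace.single j 1)) + g 0 = 0 := by
  have hD : ContDiffOn ℝ 1 (fderiv ℝ w) U := hw.fderiv_of_isOpen hU (by norm_num)
  have hdiff : ∀ x ∈ U, DifferentiableAt ℝ (fderiv ℝ w) x := fun x hx =>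
    (hD.differentiableOn (by norm_num)).differentiableAt (hU.mem_nhds hx)
  have hcont : ContinuousAt (fderiv ℝ (fderiv ℝ w)) 0 :=
    (hD.continuousOn_fderiv_of_isOpen hU le_rfl).continuousAt (hU.mem_nhds (hS h0))
  refine ⟨hdiff 0 (hS h0), ?_⟩
  have hlap : Tendsto (fun x => ∑ j : Fin 2, fderiv ℝ (fderiv ℝ w) x (EuclideanSpace.single j 1)
      (EuclideanSpace.single j 1)) (𝓝[S] 0) (𝓝 (∑ j : Fin 2, fderiv ℝ (fderiv ℝ w) 0
      (EuclideanSpace.single j 1) (EuclideanSpace.single j 1))) := by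
    refine tendsto_finsetSum _ fun j _ => ?_
    exact ((hcont.clm_apply continuousAt_const).clm_apply continuousAt_const).tendsto.mono_left
      nhdsWithin_le_nhds
  have hglim : Tendsto g (𝓝[S] 0) (𝓝 (g 0)) := by
    obtain ⟨L, -, hL⟩ := hg
    rw [tendsto_iff_norm_sub_tendsto_zero]
    have hb : Tendsto (fun x : EuclideanSpace ℝ (Fin 2) => L * ‖x - 0‖ ^ γ) (𝓝[S] 0) (𝓝 0) := by
      have hc : Continuous (fun x : EuclideanSpace ℝ (Fin 2) => L * ‖x - 0‖ ^ γ) :=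
        continuous_const.mul
          ((continuous_id.sub continuous_const).norm.rpow_const fun _ => Or.inr hγ.le)
      have := hc.tendsto 0
      simp only [sub_self, norm_zero, Real.zero_rpow hγ.ne', mul_zero] at this
      exact this.mono_left nhdsWithin_le_nhds
    refine squeeze_zero' (Eventually.of_forall fun _ => norm_nonneg _) ?_ hb
    filter_upwards [self_mem_nhdsWithin] with x hx
    exact hL x (subset_closure hx) 0 h0
  have hzero : Tendsto (fun x => (∑ j : Fin 2, fderiv ℝ (fderiv ℝ w) x
      (EuclideanSpace.single j 1) (EuclideanSpace.single j 1)) + g x) (𝓝[S] 0) (𝓝 0) := by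
    refine tendsto_const_nhds.congr' ?_
    filter_upwards [self_mem_nhdsWithin] with x hx
    rw [← heq x hx]
    congr 1
    refine Finset.sum_congr rfl fun j _ => ?_
    have := ((hdiff x (hS (subset_closure hx))).hasFDerivAt.clm_apply
      (hasFDerivAt_const (EuclideanSpace.single j (1 : ℝ)) x)).fderiv
    rw [this]
    simp
  have : (𝓝[S] (0 : EuclideanSpace ℝ (Fin 2))).NeBot := mem_closure_iff_nhdsWithin_neBot.1 h0
  exact tendsto_nhds_unique (hlap.add hglim) hzero


open scoped RealInnerProductSpace

/-- Classical-regularity form of Lemma 3.2. If `Δu + g₁ = 0` and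
`Δv + g₂ = 0` in the truncated sector `C_h ⊂ ℝ²` with apex at the origin, `g₁, g₂` are
`γ`-Hölder on `closure C_h`, `u, v` are `C²` on an open neighbourhood of `closure C_h`,
and `u = v`, `Du = Dv` on the two edges `Γ`, then `g₁(0) = g₂(0)`. -/
theorem corner_matching_sources (θm θM : ℝ) (h1 : θm < θM) (h2 : θM - θm < Real.pi)
    (h : ℝ) (hh : 0 < h)
    (Ch Γ : Set (EuclideanSpace ℝ (Fin 2)))
    (hCh : Ch = {x | ∃ r θ, 0 < r ∧ r < h ∧ θ ∈ Set.Icc θm θM ∧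
      x 0 = r * Real.cos θ ∧ x 1 = r * Real.sin θ})
    (hΓ : Γ = {x | ∃ r : ℝ, 0 ≤ r ∧ r ≤ h ∧
      ((x 0 = r * Real.cos θm ∧ x 1 = r * Real.sin θm) ∨
       (x 0 = r * Real.cos θM ∧ x 1 = r * Real.sin θM))})
    (γ : ℝ) (hγ : γ ∈ Set.Ioo (0 : ℝ) 1)
    (g₁ g₂ u v : EuclideanSpace ℝ (Fin 2) → ℂ)
    (hHolder₁ : ∃ L : ℝ, 0 ≤ L ∧ ∀ x ∈ closure Ch, ∀ y ∈ closure Ch,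
      ‖g₁ x - g₁ y‖ ≤ L * ‖x - y‖ ^ γ)
    (hHolder₂ : ∃ L : ℝ, 0 ≤ L ∧ ∀ x ∈ closure Ch, ∀ y ∈ closure Ch,
      ‖g₂ x - g₂ y‖ ≤ L * ‖x - y‖ ^ γ)
    (U : Set (EuclideanSpace ℝ (Fin 2))) (hU : IsOpen U) (hUsub : closure Ch ⊆ U)
    (hu : ContDiffOn ℝ 2 u U) (hv : ContDiffOn ℝ 2 v U)
    (hueq : ∀ x ∈ Ch,
      (∑ j : Fin 2, fderiv ℝ (fun y => fderiv ℝ u y (EuclideanSpace.single j 1)) x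
        (EuclideanSpace.single j 1)) + g₁ x = 0)
    (hveq : ∀ x ∈ Ch,
      (∑ j : Fin 2, fderiv ℝ (fun y => fderiv ℝ v y (EuclideanSpace.single j 1)) x
        (EuclideanSpace.single j 1)) + g₂ x = 0)
    (hcauchy : ∀ x ∈ Γ, u x = v x ∧ fderiv ℝ u x = fderiv ℝ v x) :
    g₁ 0 = g₂ 0 := by
  have h0 : (0 : EuclideanSpace ℝ (Fin 2)) ∈ closure Ch := by
    have hc : Continuous (fun t : ℝ => t • !₂[Real.cos θm, Real.sin θm]) := by fun_prop
    have ht := hc.tendsto 0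
    rw [zero_smul] at ht
    refine mem_closure_of_tendsto (ht.mono_left (nhdsWithin_le_nhds (s := Set.Ioi 0))) ?_
    filter_upwards [Ioo_mem_nhdsGT hh] with t ht
    rw [hCh]
    exact ⟨t, θm, ht.1, ht.2, ⟨le_rfl, h1.le⟩, by simp, by simp⟩
  obtain ⟨hdu, hu0⟩ := limit_source Ch U hU hUsub h0 γ hγ.1 g₁ u hHolder₁ hu hueq
  obtain ⟨hdv, hv0⟩ := limit_source Ch U hU hUsub h0 γ hγ.1 g₂ v hHolder₂ hv hveq
  have em := secondDeriv_eq_of_eq_on_ray hdu hdv hh !₂[Real.cos θm, Real.sin θm]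
    fun t h0 h1 => (hcauchy _ (by
      rw [hΓ]; exact ⟨t, h0, h1, Or.inl ⟨by simp, by simp⟩⟩)).2
  have eM := secondDeriv_eq_of_eq_on_ray hdu hdv hh !₂[Real.cos θM, Real.sin θM]
    fun t h0 h1 => (hcauchy _ (by
      rw [hΓ]; exact ⟨t, h0, h1, Or.inr ⟨by simp, by simp⟩⟩)).2
  have hs : Real.sin (θM - θm) ≠ 0 :=
    ne_of_gt (Real.sin_pos_of_pos_of_lt_pi (by linarith) h2)
  -- Cramer rule for the edge directions, whose determinant is `sin (θM - θm)`.
  have b0 : Real.sin (θM - θm) • EuclideanSpace.single (0 : Fin 2) (1 : ℝ) =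
      Real.sin θM • !₂[Real.cos θm, Real.sin θm] - Real.sin θm • !₂[Real.cos θM, Real.sin θM] := by
    ext i
    fin_cases i <;> simp [Real.sin_sub] <;> ring
  have b1 : Real.sin (θM - θm) • EuclideanSpace.single (1 : Fin 2) (1 : ℝ) =
      Real.cos θm • !₂[Real.cos θM, Real.sin θM] - Real.cos θM • !₂[Real.cos θm, Real.sin θm] := by
    ext i
    fin_cases i <;> simp [Real.sin_sub] <;> ring
  have e0 : fderiv ℝ (fderiv ℝ u) 0 (EuclideanSpace.single 0 1) =
      fderiv ℝ (fderiv ℝ v) 0 (EuclideanSpace.single 0 1) := by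
    refine smul_right_injective _ hs ?_
    simp only [← map_smul, b0]
    simp only [map_sub, map_smul, em, eM]
  have e1 : fderiv ℝ (fderiv ℝ u) 0 (EuclideanSpace.single 1 1) =
      fderiv ℝ (fderiv ℝ v) 0 (EuclideanSpace.single 1 1) := by
    refine smul_right_injective _ hs ?_
    simp only [← map_smul, b1]
    simp only [map_sub, map_smul, em, eM]
  rw [Fin.sum_univ_two, e0, e1, ← Fin.sum_univ_two (f := fun j : Fin 2 =>
    fderiv ℝ (fderiv ℝ v) 0 (EuclideanSpace.single j 1) (EuclideanSpace.single j 1))] at hu0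
  exact add_left_cancel (hu0.trans hv0.symm)
end

section
/- Let v₀ ∈ ℝ³ be nonzero, θ₀ ∈ (0, π/2), h > 0, and let C = {x ∈ ℝ³ : ⟪x, v₀⟫ ≥ cos θ₀ ‖x‖ ‖v₀‖} be the circular cone with apex at the origin. Let C_h = interior(C) ∩ B(0,h) be the open truncated cone and let L = {x ∈ ℝ³ : ⟪x, v₀⟫ = cos θ₀ ‖x‖ ‖v₀‖, ‖x‖ ≤ h} be its lateral boundary. Let γ ∈ (0,1), let g₁, g₂ : ℝ³ → ℂ be γ-Hölder continuous on the closure of C_h, and let u, v : ℝ³ → ℂ be twice continuously differentiable on an open set containing the closure of C_h. Assume: (i) Δu(x) + g₁(x) = 0 for all x ∈ C_h; (ii) Δv(x) + g₂(x) = 0 for all x ∈ C_h; (iii) u(x) = v(x) and Du(x) = Dv(x) for all x ∈ L. Then g₁(0) = g₂(0). -/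
/-!
Since `u` and `v` are `C²` up to and across the apex, everything happens at the level of the
second derivatives at `0`. Let `D = D²u(0) - D²v(0)`. Along a generator `t ↦ t z` of the lateral
boundary, `Du - Dv` vanishes for small `t ≥ 0`, and differentiating at `t = 0` gives `D z = 0`
(`fderiv_eq_of_ray`). The generators of a cone with half-opening angle in `(0, π/2)` span the
whole space (`eq_zero_of_generators`), so `D = 0` and in particular `Δu(0) = Δv(0)`. On the other
hand `0` lies in the closure of the open truncated cone, and the Laplacians and the sources are
continuous up to the apex, so both equations persist at `0` (`equation_at_apex`):
`g₁(0) = -Δu(0) = -Δv(0) = g₂(0)`.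
-/

open Metric
open scoped RealInnerProductSpace

/-- If two maps agree on an initial segment of the ray spanned by `z`, their derivatives at the
origin agree on `z`. It is applied to the gradients `Du` and `Dv`. -/
lemma fderiv_eq_of_ray {E F : Type*} [NormedAddCommGroup E] [NormedSpace ℝ E]
    [NormedAddCommGroup F] [NormedSpace ℝ F] {p q : E → F}
    (hp : DifferentiableAt ℝ p 0) (hq : DifferentiableAt ℝ q 0) (z : E) {ε : ℝ} (hε : 0 < ε)
    (heq : ∀ t : ℝ, 0 ≤ t → t < ε → p (t • z) = q (t • z)) :
    fderiv ℝ p 0 z = fderiv ℝ q 0 z := by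
  have ray : ∀ {r : E → F}, DifferentiableAt ℝ r 0 →
      HasDerivWithinAt (fun t : ℝ => r (t • z)) (fderiv ℝ r 0 z) (Set.Ico 0 ε) 0 := by
    intro r hr
    have h1 : HasDerivAt (fun t : ℝ => t • z) z 0 := by
      simpa using (hasDerivAt_id (0 : ℝ)).smul_const z
    have h2 : HasFDerivAt r (fderiv ℝ r 0) ((0 : ℝ) • z) := by
      simpa using hr.hasFDerivAt
    exact (h2.comp_hasDerivAt 0 h1).hasDerivWithinAt
  have hu : UniqueDiffWithinAt ℝ (Set.Ico (0 : ℝ) ε) 0 :=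
    uniqueDiffOn_Ico 0 ε 0 ⟨le_rfl, hε⟩
  refine hu.eq_deriv _ (ray hp) ((ray hq).congr (fun t ht => heq t ht.1 ht.2) ?_)
  exact heq 0 le_rfl hε

/-- The generators of a circular cone with half-opening angle in `(0, π/2)` span `ℝ³`: a linear
map that kills all of them is zero. -/
lemma eq_zero_of_generators {F : Type*} [NormedAddCommGroup F] [NormedSpace ℝ F]
    {v₀ : EuclideanSpace ℝ (Fin 3)} (hv₀ : v₀ ≠ 0) {θ₀ : ℝ}
    (hθ₀ : θ₀ ∈ Set.Ioo 0 (Real.pi / 2)) (D : EuclideanSpace ℝ (Fin 3) →L[ℝ] F)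
    (hD : ∀ z, ⟪z, v₀⟫ = Real.cos θ₀ * (‖z‖ * ‖v₀‖) → D z = 0) : D = 0 := by
  have hs : 0 < Real.sin θ₀ := Real.sin_pos_of_pos_of_lt_pi hθ₀.1 (by linarith [hθ₀.2, Real.pi_pos])
  have hc : 0 < Real.cos θ₀ := Real.cos_pos_of_mem_Ioo ⟨by linarith [hθ₀.1, Real.pi_pos], hθ₀.2⟩
  have hn : 0 < ‖v₀‖ := norm_pos_iff.mpr hv₀
  -- For `y ⟂ v₀`, this combination has norm `‖v₀‖ ‖y‖` and makes the angle `θ₀` with `v₀`.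
  have gen : ∀ y, ⟪y, v₀⟫ = 0 →
      D ((‖v₀‖ * Real.sin θ₀) • y + (‖y‖ * Real.cos θ₀) • v₀) = 0 := by
    intro y hy
    apply hD
    have hnorm : ‖(‖v₀‖ * Real.sin θ₀) • y + (‖y‖ * Real.cos θ₀) • v₀‖ = ‖v₀‖ * ‖y‖ := by
      rw [← sq_eq_sq₀ (norm_nonneg _) (by positivity), norm_add_sq_real, norm_smul, norm_smul,
        inner_smul_left, inner_smul_right, hy, Real.norm_eq_abs, Real.norm_eq_abs, mul_pow,
        mul_pow, sq_abs, sq_abs]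
      linear_combination ‖v₀‖ ^ 2 * ‖y‖ ^ 2 * Real.sin_sq_add_cos_sq θ₀
    rw [hnorm, inner_add_left, inner_smul_left, inner_smul_left, hy, real_inner_self_eq_norm_sq]
    simp only [conj_trivial]
    ring
  -- The generators built from `y` and `-y` separate the two components.
  have split : ∀ y, ⟪y, v₀⟫ = 0 → D y = 0 ∧ ‖y‖ • D v₀ = 0 := by
    intro y hy
    have h1 := gen y hy
    have h2 := gen (-y) (by simp [hy])
    rw [map_add, map_smul, map_smul] at h1 h2
    rw [norm_neg, map_neg, smul_neg] at h2
    have h3 : (2 * (‖v₀‖ * Real.sin θ₀)) • D y = 0 := by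
      have h5 := congrArg₂ (· - ·) h1 h2
      simp only [sub_zero] at h5
      rw [← h5]
      module
    have h4 : D y = 0 := (smul_eq_zero.mp h3).resolve_left (by positivity)
    refine ⟨h4, ?_⟩
    rw [h4, smul_zero, zero_add, mul_comm, mul_smul] at h1
    exact (smul_eq_zero.mp h1).resolve_left hc.ne'
  have hv : D v₀ = 0 := by
    obtain ⟨y, hy, hy0⟩ : ∃ y, ⟪y, v₀⟫ = 0 ∧ y ≠ 0 := by
      have : Fact (Module.finrank ℝ (EuclideanSpace ℝ (Fin 3)) = 2 + 1) := ⟨by simp⟩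
      have hf := Submodule.finrank_orthogonal_span_singleton (𝕜 := ℝ) (n := 2) hv₀
      have hne : (Submodule.span ℝ {v₀})ᗮ ≠ ⊥ := by
        intro hb
        rw [hb, finrank_bot] at hf
        omega
      obtain ⟨y, hy, hy0⟩ := Submodule.exists_mem_ne_zero_of_ne_bot hne
      exact ⟨y, by rw [real_inner_comm]; exact
        Submodule.mem_orthogonal_singleton_iff_inner_right.mp hy, hy0⟩
    exact (smul_eq_zero.mp (split y hy).2).resolve_left (norm_ne_zero_iff.mpr hy0)
  ext x
  have hx := (split (x - (⟪x, v₀⟫ / ‖v₀‖ ^ 2) • v₀) (by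
    rw [inner_sub_left, inner_smul_left, real_inner_self_eq_norm_sq]
    simp only [conj_trivial]
    field_simp
    ring)).1
  simpa [hv] using hx

/-- The apex is a limit point of the open truncated cone. -/
lemma apex_mem_closure {v₀ : EuclideanSpace ℝ (Fin 3)} (hv₀ : v₀ ≠ 0) {θ₀ : ℝ}
    (hθ₀ : θ₀ ∈ Set.Ioo 0 (Real.pi / 2)) {h : ℝ} (hh : 0 < h) :
    (0 : EuclideanSpace ℝ (Fin 3)) ∈
      closure (interior {x | ⟪x, v₀⟫ ≥ Real.cos θ₀ * (‖x‖ * ‖v₀‖)} ∩ ball 0 h) := by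
  have hn : 0 < ‖v₀‖ := norm_pos_iff.mpr hv₀
  have hc1 : Real.cos θ₀ < 1 := by
    have := Real.cos_lt_cos_of_nonneg_of_le_pi_div_two le_rfl hθ₀.2.le hθ₀.1
    rwa [Real.cos_zero] at this
  have hint : {x | ⟪x, v₀⟫ > Real.cos θ₀ * (‖x‖ * ‖v₀‖)} ⊆
      interior {x | ⟪x, v₀⟫ ≥ Real.cos θ₀ * (‖x‖ * ‖v₀‖)} :=
    interior_maximal (Set.ofPred_subset_ofPred.mpr fun _ hx => LT.lt.le hx)
      (isOpen_lt (by fun_prop) (by fun_prop))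
  rw [Metric.mem_closure_iff]
  intro ε hε
  -- A point of the axis at distance `min ε h / 2` from the apex.
  have hm : 0 < min ε h := lt_min hε hh
  have ht : 0 < min ε h / 2 / ‖v₀‖ := by positivity
  have hnorm : ‖(min ε h / 2 / ‖v₀‖) • v₀‖ = min ε h / 2 := by
    rw [norm_smul, Real.norm_of_nonneg ht.le]
    field_simp
  refine ⟨(min ε h / 2 / ‖v₀‖) • v₀, ⟨hint ?_, ?_⟩, ?_⟩
  · rw [Set.mem_ofPred_eq, hnorm, inner_smul_left, real_inner_self_eq_norm_sq]
    simp only [conj_trivial]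
    have : min ε h / 2 / ‖v₀‖ * ‖v₀‖ ^ 2 = min ε h / 2 * ‖v₀‖ := by field_simp
    rw [this]
    have hp : 0 < min ε h / 2 * ‖v₀‖ := by positivity
    nlinarith
  · rw [mem_ball_zero_iff, hnorm]
    linarith [min_le_right ε h]
  · rw [dist_zero_left, hnorm]
    linarith [min_le_left ε h]

lemma differentiableAt_fderiv_of_contDiffOn {U : Set (EuclideanSpace ℝ (Fin 3))} (hU : IsOpen U)
    {w : EuclideanSpace ℝ (Fin 3) → ℂ} (hw : ContDiffOn ℝ 2 w U)
    {x : EuclideanSpace ℝ (Fin 3)} (hx : x ∈ U) : DifferentiableAt ℝ (fderiv ℝ w) x :=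
  ((hw.fderiv_of_isOpen (m := 1) hU (by norm_num)).contDiffAt (hU.mem_nhds hx)).differentiableAt
    (by norm_num)

/-- An equation `Δw + g = 0` on `S` extends to the limit point `0` of `S`, by continuity of the
second derivatives of `w` and Hölder continuity of `g`. -/
lemma equation_at_apex_s13 {S U : Set (EuclideanSpace ℝ (Fin 3))} (hU : IsOpen U)
    (hS : closure S ⊆ U) (h0 : (0 : EuclideanSpace ℝ (Fin 3)) ∈ closure S)
    {w g : EuclideanSpace ℝ (Fin 3) → ℂ} (hw : ContDiffOn ℝ 2 w U) {γ : ℝ} (hγ : 0 < γ)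
    (hg : ∃ L' : ℝ, 0 ≤ L' ∧ ∀ x ∈ closure S, ∀ y ∈ closure S, ‖g x - g y‖ ≤ L' * ‖x - y‖ ^ γ)
    (heq : ∀ x ∈ S,
      (∑ j : Fin 3, fderiv ℝ (fun y => fderiv ℝ w y (EuclideanSpace.single j 1)) x
        (EuclideanSpace.single j 1)) + g x = 0) :
    (∑ j : Fin 3, fderiv ℝ (fderiv ℝ w) 0 (EuclideanSpace.single j 1)
      (EuclideanSpace.single j 1)) + g 0 = 0 := by
  obtain ⟨L', -, hL⟩ := hg
  have hgc : Filter.Tendsto g (nhdsWithin 0 S) (nhds (g 0)) := by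
    rw [tendsto_iff_norm_sub_tendsto_zero]
    have hlim : Filter.Tendsto (fun x : EuclideanSpace ℝ (Fin 3) => L' * ‖x - 0‖ ^ γ)
        (nhdsWithin 0 S) (nhds 0) := by
      have hcont : Continuous (fun x : EuclideanSpace ℝ (Fin 3) => L' * ‖x - 0‖ ^ γ) :=
        continuous_const.mul ((continuous_id.sub continuous_const).norm.rpow_const
          fun _ => Or.inr hγ.le)
      have := hcont.tendsto 0
      simp only [sub_zero, norm_zero, Real.zero_rpow hγ.ne', mul_zero] at this
      simpa using this.mono_left nhdsWithin_le_nhds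
    refine squeeze_zero' (Filter.Eventually.of_forall fun _ => norm_nonneg _) ?_ hlim
    filter_upwards [self_mem_nhdsWithin] with x hx using hL x (subset_closure hx) 0 h0
  have hD2 : ContinuousAt (fderiv ℝ (fderiv ℝ w)) 0 :=
    (((hw.fderiv_of_isOpen (m := 1) hU (by norm_num)).fderiv_of_isOpen (m := 0) hU
      (by norm_num)).continuousOn).continuousAt (hU.mem_nhds (hS h0))
  have hsum : ContinuousAt (fun x => ∑ j : Fin 3, fderiv ℝ (fderiv ℝ w) x
      (EuclideanSpace.single j 1) (EuclideanSpace.single j 1)) 0 := by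
    fun_prop
  have hlim := (hsum.tendsto.mono_left nhdsWithin_le_nhds).add hgc
  have : (nhdsWithin (0 : EuclideanSpace ℝ (Fin 3)) S).NeBot :=
    mem_closure_iff_nhdsWithin_neBot.mp h0
  refine tendsto_nhds_unique hlim (tendsto_const_nhds.congr' ?_)
  filter_upwards [self_mem_nhdsWithin] with x hx
  rw [← heq x hx]
  congr 1
  refine Finset.sum_congr rfl fun j _ => ?_
  rw [fderiv_clm_apply (differentiableAt_fderiv_of_contDiffOn hU hw (hS (subset_closure hx)))
    (differentiableAt_const _)]
  simp

/-- Three-dimensional conic-corner form of the corner vanishing results.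
If `Δu + g₁ = 0` and `Δv + g₂ = 0` in the open truncated cone
`C_h = interior(C) ∩ B(0,h) ⊂ ℝ³`, `g₁, g₂` are `γ`-Hölder on `closure C_h`, `u, v` are
`C²` on an open neighbourhood of `closure C_h`, and `u = v`, `Du = Dv` on the lateral
boundary `L`, then `g₁(0) = g₂(0)`. -/
theorem conic_corner_matching_sources (v₀ : EuclideanSpace ℝ (Fin 3)) (hv₀ : v₀ ≠ 0)
    (θ₀ : ℝ) (hθ₀ : θ₀ ∈ Set.Ioo 0 (Real.pi / 2)) (h : ℝ) (hh : 0 < h)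
    (C Ch L : Set (EuclideanSpace ℝ (Fin 3)))
    (hC : C = {x | ⟪x, v₀⟫ ≥ Real.cos θ₀ * (‖x‖ * ‖v₀‖)})
    (hCh : Ch = interior C ∩ ball (0 : EuclideanSpace ℝ (Fin 3)) h)
    (hL : L = {x | ⟪x, v₀⟫ = Real.cos θ₀ * (‖x‖ * ‖v₀‖) ∧ ‖x‖ ≤ h})
    (γ : ℝ) (hγ : γ ∈ Set.Ioo (0 : ℝ) 1)
    (g₁ g₂ u v : EuclideanSpace ℝ (Fin 3) → ℂ)
    (hHolder₁ : ∃ L' : ℝ, 0 ≤ L' ∧ ∀ x ∈ closure Ch, ∀ y ∈ closure Ch,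
      ‖g₁ x - g₁ y‖ ≤ L' * ‖x - y‖ ^ γ)
    (hHolder₂ : ∃ L' : ℝ, 0 ≤ L' ∧ ∀ x ∈ closure Ch, ∀ y ∈ closure Ch,
      ‖g₂ x - g₂ y‖ ≤ L' * ‖x - y‖ ^ γ)
    (U : Set (EuclideanSpace ℝ (Fin 3))) (hU : IsOpen U) (hUsub : closure Ch ⊆ U)
    (hu : ContDiffOn ℝ 2 u U) (hv : ContDiffOn ℝ 2 v U)
    (hueq : ∀ x ∈ Ch,
      (∑ j : Fin 3, fderiv ℝ (fun y => fderiv ℝ u y (EuclideanSpace.single j 1)) x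
        (EuclideanSpace.single j 1)) + g₁ x = 0)
    (hveq : ∀ x ∈ Ch,
      (∑ j : Fin 3, fderiv ℝ (fun y => fderiv ℝ v y (EuclideanSpace.single j 1)) x
        (EuclideanSpace.single j 1)) + g₂ x = 0)
    (hcauchy : ∀ x ∈ L, u x = v x ∧ fderiv ℝ u x = fderiv ℝ v x) :
    g₁ 0 = g₂ 0 := by
  subst hC hCh hL
  have h0 := apex_mem_closure hv₀ hθ₀ hh
  have hu2 := differentiableAt_fderiv_of_contDiffOn hU hu (hUsub h0)
  have hv2 := differentiableAt_fderiv_of_contDiffOn hU hv (hUsub h0)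
  have hD : fderiv ℝ (fderiv ℝ u) 0 - fderiv ℝ (fderiv ℝ v) 0 = 0 := by
    refine eq_zero_of_generators hv₀ hθ₀ _ fun z hz => sub_eq_zero.mpr ?_
    -- `t z` stays in the ball of radius `h` for `t < h / (‖z‖ + 1)`, also when `z = 0`.
    refine fderiv_eq_of_ray hu2 hv2 z (ε := h / (‖z‖ + 1)) (by positivity)
      fun t ht htε => (hcauchy _ ⟨?_, ?_⟩).2
    · rw [inner_smul_left, hz, norm_smul, Real.norm_of_nonneg ht]
      simp only [conj_trivial]
      ring
    · rw [norm_smul, Real.norm_of_nonneg ht]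
      rw [lt_div_iff₀ (by positivity)] at htε
      linarith
  have e1 := equation_at_apex_s13 hU hUsub h0 hu hγ.1 hHolder₁ hueq
  have e2 := equation_at_apex_s13 hU hUsub h0 hv hγ.1 hHolder₂ hveq
  have hDuv : fderiv ℝ (fderiv ℝ u) 0 = fderiv ℝ (fderiv ℝ v) 0 := sub_eq_zero.mp hD
  rw [hDuv] at e1
  exact add_left_cancel (e1.trans e2.symm)
end
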